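/- arXiv:2006.11859 — 2 statements merged into one kernel-verified Lean document; each statement's English description precedes it below -/
import Mathlib

section
/- Let Ω ⊂ ℝ^N be a bounded open set with smooth boundary, s ∈ (0,1), Q = ℝ^{2N} ∖ ((ℝ^N∖Ω) × (ℝ^N∖Ω)), let p : cl(Q) → ℝ be continuous and symmetric with 2 ≤ p⁻ ≤ p(x,y) ≤ p⁺ < ∞ and s p⁺ < N, and let q : cl(Ω) → ℝ be continuous with p⁺ < q⁻ ≤ q(x) ≤ q⁺ < p_s*(x)/2 + 1 for all x ∈ cl(Ω), where p̄(x) = p(x,x) and p_s*(x) = N p̄(x)/(N − s p̄(x)). Then for every u ∈ W₀ with u ≠ 0 (not a.e. zero), there exists a unique λ > 0 such that I(λu) = 0 and E(λu) = max_{t ≥ 0} E(tu). -/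
/-!
Write `A(x,y) = |u(x)-u(y)|^{p(x,y)} / |x-y|^{N+sp(x,y)}` and `B = |u|^{q}`. Along the fibre,
`I(tu) = ∫ t^p A - ∫ t^q B` and `E(tu) = ∫ t^p A / p - ∫ t^q B / q`.

**Fibre analysis** (`FibreTerm`). Both integrals are continuous in `t`, and for `τ ≥ 1` replacing `t`
by `τ t` multiplies the first by at most `τ^{p⁺}` and the second by at least `τ^{q⁻}`. As `p⁺ < q⁻`,
they cross exactly once on `(0, ∞)` (`exists_balance`, `balance_not_lt`). No derivative of `E` is
needed for maximality: `a ↦ (τ^a - 1)/a` is nondecreasing by Bernoulli's inequality, so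
`E(τlu) - E(lu) ≤ (τ^{p⁺} - 1)/p⁺ · I(lu) = 0` (`balance_max`).

**Integrability of `|u|^q`**. This is a subcritical fractional Sobolev embedding
(`lintegral_rpow_lt_top`), obtained from the distribution function `m(t) = |{|u| > t}|`. If
`2 m(t) ≤ ω ρ^N`, where `ω` is the volume of the unit ball, then around each `x` with `|u(x)| > 2t` at
least half of the ball of radius `ρ` consists of points `y` with `|u(x) - u(y)| ≥ t`; integrating `A`
over these pairs gives `m(2t) ≤ C t^{-P} ρ^{sP}` (`superlevel_estimate`), where `P` is a lower bound
for `p` near the diagonal. Hence decay of `m` of order `a` improves to order `P + (sP/N) a`, and the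
iteration reaches any order below the fixed point `NP/(N - sP)` (`exists_decay`). By compactness `P`
can be chosen so that `q⁺` is below this critical exponent (`exists_near_diagonal`).
-/

open MeasureTheory Filter Set
open scoped ENNReal

noncomputable section

/-- The modular of the variable exponent Lebesgue space `L^{h(·)}(Ω)`. -/
def vModular {N : ℕ} (Ω : Set (EuclideanSpace ℝ (Fin N))) (h : EuclideanSpace ℝ (Fin N) → ℝ)
    (u : EuclideanSpace ℝ (Fin N) → ℝ) : ℝ≥0∞ :=
  ∫⁻ x in Ω, ENNReal.ofReal (|u x| ^ h x)

/-- The Luxemburg norm on `L^{h(·)}(Ω)`. -/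
def vNorm {N : ℕ} (Ω : Set (EuclideanSpace ℝ (Fin N))) (h : EuclideanSpace ℝ (Fin N) → ℝ)
    (u : EuclideanSpace ℝ (Fin N) → ℝ) : ℝ :=
  sInf {l : ℝ | 0 < l ∧ vModular Ω h (fun x => u x / l) ≤ 1}

/-- Membership in the variable exponent Lebesgue space `L^{h(·)}(Ω)`. -/
def MemVLp {N : ℕ} (Ω : Set (EuclideanSpace ℝ (Fin N))) (h : EuclideanSpace ℝ (Fin N) → ℝ)
    (u : EuclideanSpace ℝ (Fin N) → ℝ) : Prop :=
  AEMeasurable u (volume.restrict Ω) ∧ ∃ l : ℝ, 0 < l ∧ vModular Ω h (fun x => u x / l) < ⊤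

/-- The variable exponent Gagliardo modular with scaling parameter `l`, over a set
`D ⊆ ℝ^N × ℝ^N`. -/
def gagModularOn {N : ℕ} (D : Set (EuclideanSpace ℝ (Fin N) × EuclideanSpace ℝ (Fin N)))
    (s : ℝ) (p : EuclideanSpace ℝ (Fin N) × EuclideanSpace ℝ (Fin N) → ℝ) (l : ℝ)
    (u : EuclideanSpace ℝ (Fin N) → ℝ) : ℝ≥0∞ :=
  ∫⁻ z in D, ENNReal.ofReal
    (|u z.1 - u z.2| ^ p z / (l ^ p z * ‖z.1 - z.2‖ ^ ((N : ℝ) + s * p z)))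

/-- The variable exponent Gagliardo (Luxemburg-type) seminorm over a set `D`. -/
def gagSemiOn {N : ℕ} (D : Set (EuclideanSpace ℝ (Fin N) × EuclideanSpace ℝ (Fin N)))
    (s : ℝ) (p : EuclideanSpace ℝ (Fin N) × EuclideanSpace ℝ (Fin N) → ℝ)
    (u : EuclideanSpace ℝ (Fin N) → ℝ) : ℝ :=
  sInf {l : ℝ | 0 < l ∧ gagModularOn D s p l u ≤ 1}

/-- The set `Q = ℝ^{2N} ∖ ((ℝ^N∖Ω) × (ℝ^N∖Ω))`. -/
def Qset {N : ℕ} (Ω : Set (EuclideanSpace ℝ (Fin N))) :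
    Set (EuclideanSpace ℝ (Fin N) × EuclideanSpace ℝ (Fin N)) :=
  (Ωᶜ ×ˢ Ωᶜ)ᶜ

/-- The Gagliardo modular `ρ_{s,p(·,·)}` over `Q` (extended-real valued). -/
def gagRho {N : ℕ} (Ω : Set (EuclideanSpace ℝ (Fin N))) (s : ℝ)
    (p : EuclideanSpace ℝ (Fin N) × EuclideanSpace ℝ (Fin N) → ℝ)
    (u : EuclideanSpace ℝ (Fin N) → ℝ) : ℝ≥0∞ :=
  ∫⁻ z in Qset Ω, ENNReal.ofReal (|u z.1 - u z.2| ^ p z / ‖z.1 - z.2‖ ^ ((N : ℝ) + s * p z))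

/-- The Gagliardo seminorm `[u]_{s,p(·,·)}` over `Q`. -/
def gagSemi {N : ℕ} (Ω : Set (EuclideanSpace ℝ (Fin N))) (s : ℝ)
    (p : EuclideanSpace ℝ (Fin N) × EuclideanSpace ℝ (Fin N) → ℝ)
    (u : EuclideanSpace ℝ (Fin N) → ℝ) : ℝ :=
  gagSemiOn (Qset Ω) s p u

/-- Membership in the space `W₀`: measurable, vanishing a.e. outside `Ω`, finite
Gagliardo modular for some scaling. -/
def MemW0 {N : ℕ} (Ω : Set (EuclideanSpace ℝ (Fin N))) (s : ℝ)
    (p : EuclideanSpace ℝ (Fin N) × EuclideanSpace ℝ (Fin N) → ℝ)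
    (u : EuclideanSpace ℝ (Fin N) → ℝ) : Prop :=
  Measurable u ∧ (∀ᵐ x ∂(volume.restrict Ωᶜ), u x = 0) ∧
    ∃ l : ℝ, 0 < l ∧ gagModularOn (Qset Ω) s p l u < ⊤

/-- The Gagliardo modular `ρ_{s,p(·,·)}` over `Q` (real valued). -/
def rhoR {N : ℕ} (Ω : Set (EuclideanSpace ℝ (Fin N))) (s : ℝ)
    (p : EuclideanSpace ℝ (Fin N) × EuclideanSpace ℝ (Fin N) → ℝ)
    (u : EuclideanSpace ℝ (Fin N) → ℝ) : ℝ :=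
  ∫ z in Qset Ω, |u z.1 - u z.2| ^ p z / ‖z.1 - z.2‖ ^ ((N : ℝ) + s * p z)

/-- The energy functional `E`. -/
def energyE {N : ℕ} (Ω : Set (EuclideanSpace ℝ (Fin N))) (s : ℝ)
    (p : EuclideanSpace ℝ (Fin N) × EuclideanSpace ℝ (Fin N) → ℝ)
    (q : EuclideanSpace ℝ (Fin N) → ℝ) (u : EuclideanSpace ℝ (Fin N) → ℝ) : ℝ :=
  (∫ z in Qset Ω, |u z.1 - u z.2| ^ p z / (p z * ‖z.1 - z.2‖ ^ ((N : ℝ) + s * p z))) -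
    ∫ x in Ω, |u x| ^ q x / q x

/-- The Nehari functional `I`. -/
def nehariI {N : ℕ} (Ω : Set (EuclideanSpace ℝ (Fin N))) (s : ℝ)
    (p : EuclideanSpace ℝ (Fin N) × EuclideanSpace ℝ (Fin N) → ℝ)
    (q : EuclideanSpace ℝ (Fin N) → ℝ) (u : EuclideanSpace ℝ (Fin N) → ℝ) : ℝ :=
  rhoR Ω s p u - ∫ x in Ω, |u x| ^ q x

/-! ### One-dimensional analysis along a fibre -/

/-- The map `a ↦ (τ ^ a - 1) / a` is nondecreasing on `(0, ∞)`; this is Bernoulli's inequality. -/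
lemma rpow_sub_one_div_mono {τ a b : ℝ} (hτ : 0 ≤ τ) (ha : 0 < a) (hab : a ≤ b) :
    (τ ^ a - 1) / a ≤ (τ ^ b - 1) / b := by
  have hb : 0 < b := ha.trans_le hab
  have h := one_add_mul_self_le_rpow_one_add (s := τ ^ a - 1)
    (by linarith [Real.rpow_nonneg hτ a]) (p := b / a) ((one_le_div ha).2 hab)
  rw [add_sub_cancel, ← Real.rpow_mul hτ, mul_div_cancel₀ _ ha.ne'] at h
  rw [div_le_div_iff₀ ha hb]
  have h2 : b / a * (τ ^ a - 1) * a = b * (τ ^ a - 1) := by field_simp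
  nlinarith

/-- The standing assumptions on one of the two terms of the functional along a fibre:
a nonnegative integrable weight `A` with positive mass and a measurable exponent `e` with
values in `[lo, hi]`, where `lo > 0`. -/
structure FibreTerm {α : Type*} [MeasurableSpace α] (μ : Measure α) (A e : α → ℝ)
    (lo hi : ℝ) : Prop where
  nonneg : ∀ x, 0 ≤ A x
  integrable : Integrable A μ
  pos : 0 < ∫ x, A x ∂μ
  meas : AEMeasurable e μ
  lo_pos : 0 < lo
  bound : ∀ᵐ x ∂μ, lo ≤ e x ∧ e x ≤ hi

namespace FibreTerm

variable {α : Type*} [MeasurableSpace α] {μ : Measure α} {A e : α → ℝ} {lo hi : ℝ}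

lemma rpow_le {t b x : ℝ} (ht : 0 ≤ t) (htb : t ≤ b) (h1 : 0 ≤ x) (h2 : x ≤ hi) :
    t ^ x ≤ 1 + b ^ hi := by
  rcases le_total b 1 with h | h
  · have := Real.rpow_le_one ht (htb.trans h) h1
    have := Real.rpow_nonneg (ht.trans htb) hi
    linarith
  · have h3 := Real.rpow_le_rpow ht htb h1
    have h4 := Real.rpow_le_rpow_of_exponent_le h h2
    linarith

lemma aesm (h : FibreTerm μ A e lo hi) (t : ℝ) :
    AEStronglyMeasurable (fun x => t ^ e x) μ :=
  (h.meas.const_pow t).aestronglyMeasurable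

lemma integrable_rpow (h : FibreTerm μ A e lo hi) {t : ℝ} (ht : 0 ≤ t) :
    Integrable (fun x => t ^ e x * A x) μ := by
  refine h.integrable.bdd_mul (c := 1 + t ^ hi) (h.aesm t) ?_
  filter_upwards [h.bound] with x hx
  rw [Real.norm_of_nonneg (Real.rpow_nonneg ht _)]
  exact rpow_le ht le_rfl (h.lo_pos.le.trans hx.1) hx.2

lemma integrable_rpow_div (h : FibreTerm μ A e lo hi) {t : ℝ} (ht : 0 ≤ t) :
    Integrable (fun x => t ^ e x * A x / e x) μ := by
  have := (h.integrable_rpow ht).bdd_mul (c := lo⁻¹) (f := fun x => (e x)⁻¹)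
    h.meas.inv.aestronglyMeasurable ?_
  · simpa only [div_eq_inv_mul] using this
  · filter_upwards [h.bound] with x hx
    rw [Real.norm_of_nonneg (inv_nonneg.2 (h.lo_pos.le.trans hx.1))]
    exact inv_anti₀ h.lo_pos hx.1

lemma continuousOn (h : FibreTerm μ A e lo hi) (b : ℝ) :
    ContinuousOn (fun t : ℝ => ∫ x, t ^ e x * A x ∂μ) (Icc 0 b) := by
  refine continuousOn_of_dominated (bound := fun x => (1 + b ^ hi) * A x) ?_ ?_
    (h.integrable.const_mul _) ?_
  · intro t ht
    exact (h.integrable_rpow ht.1).aestronglyMeasurable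
  · intro t ht
    filter_upwards [h.bound] with x hx
    rw [Real.norm_of_nonneg (mul_nonneg (Real.rpow_nonneg ht.1 _) (h.nonneg x))]
    exact mul_le_mul_of_nonneg_right (rpow_le ht.1 ht.2 (h.lo_pos.le.trans hx.1) hx.2)
      (h.nonneg x)
  · filter_upwards [h.bound] with x hx
    refine ContinuousOn.mul ?_ continuousOn_const
    exact (Real.continuous_rpow_const (h.lo_pos.le.trans hx.1)).continuousOn

lemma le_upper (h : FibreTerm μ A e lo hi) {t τ : ℝ} (ht : 0 ≤ t) (hτ : 1 ≤ τ) :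
    ∫ x, (τ * t) ^ e x * A x ∂μ ≤ τ ^ hi * ∫ x, t ^ e x * A x ∂μ := by
  rw [← integral_const_mul]
  refine integral_mono_ae (h.integrable_rpow (by positivity))
    ((h.integrable_rpow ht).const_mul _) ?_
  filter_upwards [h.bound] with x hx
  rw [Real.mul_rpow (by positivity) ht, mul_assoc]
  exact mul_le_mul_of_nonneg_right (Real.rpow_le_rpow_of_exponent_le hτ hx.2)
    (mul_nonneg (Real.rpow_nonneg ht _) (h.nonneg x))

lemma lower_le (h : FibreTerm μ A e lo hi) {t τ : ℝ} (ht : 0 ≤ t) (hτ : 1 ≤ τ) :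
    τ ^ lo * ∫ x, t ^ e x * A x ∂μ ≤ ∫ x, (τ * t) ^ e x * A x ∂μ := by
  rw [← integral_const_mul]
  refine integral_mono_ae ((h.integrable_rpow ht).const_mul _)
    (h.integrable_rpow (by positivity)) ?_
  filter_upwards [h.bound] with x hx
  rw [Real.mul_rpow (by positivity) ht, mul_assoc]
  exact mul_le_mul_of_nonneg_right (Real.rpow_le_rpow_of_exponent_le hτ hx.1)
    (mul_nonneg (Real.rpow_nonneg ht _) (h.nonneg x))

lemma at_one : ∫ x, (1 : ℝ) ^ e x * A x ∂μ = ∫ x, A x ∂μ := by simp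

lemma pos_of_pos (h : FibreTerm μ A e lo hi) {t : ℝ} (ht : 0 < t) :
    0 < ∫ x, t ^ e x * A x ∂μ := by
  rcases le_total 1 t with h1 | h1
  · have := h.lower_le zero_le_one h1
    rw [at_one, mul_one] at this
    exact (mul_pos (Real.rpow_pos_of_pos ht _) h.pos).trans_le this
  · have := h.le_upper ht.le ((one_le_inv₀ ht).2 h1)
    rw [inv_mul_cancel₀ ht.ne', at_one] at this
    exact pos_of_mul_pos_right (h.pos.trans_le this) (Real.rpow_nonneg (by positivity) _)

variable {β : Type*} [MeasurableSpace β] {ν : Measure β} {B f : β → ℝ} {lo' hi' : ℝ}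

lemma exists_balance (h : FibreTerm μ A e lo hi) (h' : FibreTerm ν B f lo' hi')
    (hlt : hi < lo') :
    ∃ l : ℝ, 0 < l ∧ ∫ x, l ^ e x * A x ∂μ = ∫ x, l ^ f x * B x ∂ν := by
  set a := ∫ x, A x ∂μ with ha
  set b := ∫ x, B x ∂ν with hb
  have ha0 : 0 < a := h.pos
  have hb0 : 0 < b := h'.pos
  have htend := tendsto_rpow_atTop (sub_pos.2 hlt)
  obtain ⟨T, hT1, hTa, hTb⟩ := ((eventually_ge_atTop (1 : ℝ)).and
    ((htend.eventually_ge_atTop (a / b)).and (htend.eventually_ge_atTop (b / a)))).exists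
  have hT0 : 0 < T := by linarith
  have hp : 0 < T ^ hi := Real.rpow_pos_of_pos hT0 _
  have hsplit : T ^ lo' = T ^ hi * T ^ (lo' - hi) := by
    rw [← Real.rpow_add hT0]; congr 1; ring
  have hup : ∫ x, T ^ e x * A x ∂μ ≤ ∫ x, T ^ f x * B x ∂ν := by
    have h1 := h.le_upper zero_le_one hT1
    have h2 := h'.lower_le zero_le_one hT1
    rw [at_one, mul_one] at h1 h2
    refine h1.trans (le_trans ?_ h2)
    rw [hsplit, mul_assoc]
    exact mul_le_mul_of_nonneg_left ((div_le_iff₀ hb0).1 hTa) hp.le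
  have hdn : ∫ x, T⁻¹ ^ f x * B x ∂ν ≤ ∫ x, T⁻¹ ^ e x * A x ∂μ := by
    have h1 := h.le_upper (inv_nonneg.2 hT0.le) hT1
    have h2 := h'.lower_le (inv_nonneg.2 hT0.le) hT1
    rw [mul_inv_cancel₀ hT0.ne', at_one] at h1 h2
    have h3 := (div_le_iff₀ ha0).1 hTb
    rw [hsplit] at h2
    have hq : 0 < T ^ (lo' - hi) := Real.rpow_pos_of_pos hT0 _
    refine le_of_mul_le_mul_left ?_ (mul_pos hp hq)
    calc _ ≤ b := h2
      _ ≤ T ^ (lo' - hi) * a := h3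
      _ ≤ T ^ (lo' - hi) * (T ^ hi * ∫ x, T⁻¹ ^ e x * A x ∂μ) :=
        mul_le_mul_of_nonneg_left h1 hq.le
      _ = _ := by ring
  have hsub : Icc T⁻¹ T ⊆ Icc 0 T := Icc_subset_Icc_left (inv_nonneg.2 hT0.le)
  have hTT : T⁻¹ ≤ T := (inv_le_one_of_one_le₀ hT1).trans hT1
  have hc : ContinuousOn (fun t : ℝ => (∫ x, t ^ f x * B x ∂ν) - ∫ x, t ^ e x * A x ∂μ)
      (Icc T⁻¹ T) :=
    ((h'.continuousOn T).sub (h.continuousOn T)).mono hsub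
  obtain ⟨l, hl, hl0⟩ := intermediate_value_Icc hTT hc
    (show (0 : ℝ) ∈ Icc _ _ from ⟨by simpa using hdn, by simpa using hup⟩)
  exact ⟨l, (inv_pos.2 hT0).trans_le hl.1, (sub_eq_zero.1 hl0).symm⟩

lemma balance_not_lt (h : FibreTerm μ A e lo hi) (h' : FibreTerm ν B f lo' hi')
    (hlt : hi < lo') {l m : ℝ} (hl : 0 < l)
    (hlb : ∫ x, l ^ e x * A x ∂μ = ∫ x, l ^ f x * B x ∂ν)
    (hmb : ∫ x, m ^ e x * A x ∂μ = ∫ x, m ^ f x * B x ∂ν) : ¬ l < m := by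
  intro hlm
  have hτ : 1 < m / l := (one_lt_div hl).2 hlm
  have h1 := h.le_upper hl.le hτ.le
  have h2 := h'.lower_le hl.le hτ.le
  rw [div_mul_cancel₀ _ hl.ne'] at h1 h2
  rw [← hlb, ← hmb] at h2
  have h3 := h2.trans h1
  exact absurd (le_of_mul_le_mul_right h3 (h.pos_of_pos hl))
    (not_le.2 (Real.rpow_lt_rpow_of_exponent_lt hτ hlt))

/-- A balance point maximizes the energy on its fibre: with `τ = t / l`, the increment of the
energy is at most `(τ ^ hi - 1) / hi` times the difference of the two balanced terms. -/
lemma balance_max (h : FibreTerm μ A e lo hi) (h' : FibreTerm ν B f lo' hi')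
    (hlt : hi < lo') {l t : ℝ} (hl : 0 < l) (ht : 0 ≤ t)
    (hlb : ∫ x, l ^ e x * A x ∂μ = ∫ x, l ^ f x * B x ∂ν) (hhi : 0 < hi) :
    (∫ x, t ^ e x * A x / e x ∂μ) - ∫ x, t ^ f x * B x / f x ∂ν ≤
      (∫ x, l ^ e x * A x / e x ∂μ) - ∫ x, l ^ f x * B x / f x ∂ν := by
  set τ := t / l with hτdef
  have hτ : 0 ≤ τ := by positivity
  have htl : t = τ * l := by rw [hτdef, div_mul_cancel₀ _ hl.ne']
  set k := (τ ^ hi - 1) / hi with hk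
  have key : ∀ a w : ℝ, t ^ a * w / a - l ^ a * w / a = (τ ^ a - 1) / a * (l ^ a * w) := by
    intro a w
    rw [htl, Real.mul_rpow hτ hl.le]; ring
  have e1 : (∫ x, t ^ e x * A x / e x ∂μ) - ∫ x, l ^ e x * A x / e x ∂μ ≤
      k * ∫ x, l ^ e x * A x ∂μ := by
    rw [← integral_sub (h.integrable_rpow_div ht) (h.integrable_rpow_div hl.le),
      ← integral_const_mul]
    refine integral_mono_ae ((h.integrable_rpow_div ht).sub (h.integrable_rpow_div hl.le))
      ((h.integrable_rpow hl.le).const_mul _) ?_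
    filter_upwards [h.bound] with x hx
    rw [key]
    exact mul_le_mul_of_nonneg_right
      (rpow_sub_one_div_mono hτ (h.lo_pos.trans_le hx.1) hx.2)
      (mul_nonneg (Real.rpow_nonneg hl.le _) (h.nonneg x))
  have e2 : k * ∫ x, l ^ f x * B x ∂ν ≤
      (∫ x, t ^ f x * B x / f x ∂ν) - ∫ x, l ^ f x * B x / f x ∂ν := by
    rw [← integral_sub (h'.integrable_rpow_div ht) (h'.integrable_rpow_div hl.le),
      ← integral_const_mul]
    refine integral_mono_ae ((h'.integrable_rpow hl.le).const_mul _)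
      ((h'.integrable_rpow_div ht).sub (h'.integrable_rpow_div hl.le)) ?_
    filter_upwards [h'.bound] with x hx
    rw [key]
    exact mul_le_mul_of_nonneg_right
      (rpow_sub_one_div_mono hτ hhi (hlt.le.trans hx.1))
      (mul_nonneg (Real.rpow_nonneg hl.le _) (h'.nonneg x))
  rw [hlb] at e1
  linarith

end FibreTerm

/-! ### Decay of a distribution function by bootstrap -/

/-- If `m (2t) ≤ C t^{-P} ρ^σ` whenever `ρ ≤ r` satisfies `2 m(t) ≤ ω ρ^N`, and `m → 0`, then
`m` decays like `t^{-b}` for some `b > Q`, as soon as `Q < P + (σ / N) Q`. Indeed decay of order `a`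
improves to order `P + (σ / N) a`, a gain bounded below as long as `a ≤ Q`. -/
lemma exists_decay {m : ℝ → ℝ} {ω r C P σ Q : ℝ} {N : ℕ} (hN : 0 < N) (hω : 0 < ω)
    (hr : 0 < r) (hC : 0 ≤ C) (hP : 0 < P) (hσ : 0 ≤ σ) (hσN : σ ≤ N)
    (hcore : ∀ t ρ : ℝ, 1 ≤ t → 0 < ρ → ρ ≤ r → 2 * m t ≤ ω * ρ ^ N →
      m (2 * t) ≤ C * (t ^ (-P) * ρ ^ σ))
    (hm : Tendsto m atTop (nhds 0)) (hQ : Q < P + σ / N * Q) :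
    ∃ b A : ℝ, Q < b ∧ 0 < A ∧ ∀ᶠ t in atTop, m t ≤ A * t ^ (-b) := by
  have hN' : (0 : ℝ) < N := by exact_mod_cast hN
  have halve : ∀ a D : ℝ, 0 ≤ D → (∀ᶠ t in atTop, m (2 * t) ≤ D * t ^ (-a)) →
      ∃ A : ℝ, 0 < A ∧ ∀ᶠ t in atTop, m t ≤ A * t ^ (-a) := by
    intro a D hD h
    refine ⟨(D + 1) * 2 ^ a, by positivity, ?_⟩
    have h2 : Tendsto (fun t : ℝ => t / 2) atTop atTop :=
      tendsto_id.atTop_div_const (by norm_num)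
    filter_upwards [h2.eventually h, eventually_gt_atTop 0] with t ht ht0
    rw [mul_div_cancel₀ t (two_ne_zero)] at ht
    have e : (t / 2) ^ (-a) = 2 ^ a * t ^ (-a) := by
      rw [Real.div_rpow ht0.le (by norm_num), Real.rpow_neg (by norm_num : (0:ℝ) ≤ 2)]
      field_simp
    rw [e] at ht
    have : 0 ≤ 2 ^ a * t ^ (-a) := by positivity
    nlinarith
  have base : ∃ A : ℝ, 0 < A ∧ ∀ᶠ t in atTop, m t ≤ A * t ^ (-P) := by
    refine halve P (C * r ^ σ) (by positivity) ?_
    have : ∀ᶠ t in atTop, m t < ω * r ^ N / 2 := hm.eventually_lt_const (by positivity)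
    filter_upwards [this, eventually_ge_atTop 1] with t h1 h2
    have := hcore t r h2 hr le_rfl (by linarith)
    linarith
  have step : ∀ a : ℝ, 0 < a → (∃ A : ℝ, 0 < A ∧ ∀ᶠ t in atTop, m t ≤ A * t ^ (-a)) →
      ∃ A : ℝ, 0 < A ∧ ∀ᶠ t in atTop, m t ≤ A * t ^ (-(P + σ / N * a)) := by
    rintro a ha ⟨A, hA, h⟩
    -- the radius for which the assumed decay gives `ω ρ^N = 2 A t^{-a}`
    set c := (2 * A / ω) ^ (1 / (N : ℝ)) with hc
    have hc0 : 0 < c := by positivity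
    refine halve _ (C * c ^ σ) (by positivity) ?_
    have hρ : Tendsto (fun t : ℝ => c * t ^ (-(a / N))) atTop (nhds 0) := by
      simpa using (tendsto_rpow_neg_atTop (div_pos ha hN')).const_mul c
    filter_upwards [h, hρ.eventually_lt_const hr, eventually_ge_atTop 1] with t h1 h2 h3
    have ht0 : 0 < t := by linarith
    have hpow : (c * t ^ (-(a / N))) ^ N = 2 * A / ω * t ^ (-a) := by
      rw [mul_pow, hc, ← Real.rpow_natCast, ← Real.rpow_mul (by positivity),
        ← Real.rpow_natCast (t ^ _), ← Real.rpow_mul ht0.le]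
      congr 1
      · rw [one_div, inv_mul_cancel₀ hN'.ne', Real.rpow_one]
      · congr 1; field_simp
    have := hcore t (c * t ^ (-(a / N))) h3 (by positivity) h2.le (by
      rw [hpow]
      have : ω * (2 * A / ω * t ^ (-a)) = 2 * (A * t ^ (-a)) := by field_simp
      linarith)
    refine this.trans (le_of_eq ?_)
    rw [Real.mul_rpow hc0.le (by positivity), ← Real.rpow_mul ht0.le, neg_add,
      Real.rpow_add ht0]
    have : -(a / N) * σ = -(σ / N * a) := by field_simp
    rw [this]; ring
  have hκ : σ / N ≤ 1 := (div_le_one hN').2 hσN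
  set δ := P + σ / N * Q - Q with hδ
  have hδ0 : 0 < δ := by linarith
  have iter : ∀ n : ℕ, ∃ a : ℝ, 0 < a ∧ (Q < a ∨ n * δ ≤ a) ∧
      ∃ A : ℝ, 0 < A ∧ ∀ᶠ t in atTop, m t ≤ A * t ^ (-a) := by
    intro n
    induction n with
    | zero => exact ⟨P, hP, Or.inr (by simpa using hP.le), base⟩
    | succ n ih =>
      obtain ⟨a, ha, h1, h2⟩ := ih
      by_cases hQa : Q < a
      · exact ⟨a, ha, Or.inl hQa, h2⟩
      · have h3 := h1.resolve_left hQa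
        refine ⟨P + σ / N * a, by positivity, Or.inr ?_, step a ha h2⟩
        push_cast
        push Not at hQa
        have := mul_le_mul_of_nonneg_left hQa (sub_nonneg.2 hκ)
        nlinarith
  obtain ⟨n, hn⟩ := exists_nat_gt (Q / δ)
  obtain ⟨a, ha, h1, A, hA, h2⟩ := iter n
  refine ⟨a, A, ?_, hA, h2⟩
  rcases h1 with h1 | h1
  · exact h1
  · exact ((div_lt_iff₀ hδ0).1 hn).trans_le h1

/-- Polynomial decay of the distribution function of order `b > Q` on a finite measure space
gives integrability of the `Q`-th power. -/
lemma lintegral_rpow_lt_top_of_decay {α : Type*} [MeasurableSpace α] {μ : Measure α}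
    [IsFiniteMeasure μ] {u : α → ℝ} (hu : Measurable u) {Q b A : ℝ} (hQ : 1 ≤ Q) (hb : Q < b)
    (hA : 0 < A) (h : ∀ᶠ t in atTop, μ {x | t < |u x|} ≤ ENNReal.ofReal (A * t ^ (-b))) :
    ∫⁻ x, ENNReal.ofReal (|u x| ^ Q) ∂μ < ⊤ := by
  rw [lintegral_rpow_eq_lintegral_meas_lt_mul μ (ae_of_all _ fun x => abs_nonneg _)
    (by fun_prop) (by linarith)]
  refine ENNReal.mul_lt_top ENNReal.ofReal_lt_top ?_
  obtain ⟨T, hT⟩ := eventually_atTop.1 (h.and (eventually_ge_atTop 1))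
  have hT1 : 1 ≤ T := (hT T le_rfl).2
  have hT0 : 0 < T := by linarith
  rw [← Ioc_union_Ioi_eq_Ioi hT0.le]
  refine (lintegral_union_le _ _ _).trans_lt (ENNReal.add_lt_top.2 ⟨?_, ?_⟩)
  · calc _ ≤ ∫⁻ t in Ioc 0 T, μ univ * ENNReal.ofReal (T ^ (Q - 1)) := by
          refine setLIntegral_mono' measurableSet_Ioc fun t ht => ?_
          gcongr
          · exact subset_univ _
          · exact ht.1.le
          · exact ht.2
      _ < ⊤ := by
          rw [setLIntegral_const]
          exact ENNReal.mul_lt_top (ENNReal.mul_lt_top (measure_lt_top _ _)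
            ENNReal.ofReal_lt_top) (by simp)
  · have hint : IntegrableOn (fun t : ℝ => A * t ^ (-b + (Q - 1))) (Ioi T) :=
      (integrableOn_Ioi_rpow_of_lt (by linarith) hT0).const_mul A
    calc _ ≤ ∫⁻ t in Ioi T, ENNReal.ofReal (A * t ^ (-b + (Q - 1))) := by
          refine setLIntegral_mono' measurableSet_Ioi fun t ht => ?_
          have ht0 : 0 < t := hT0.trans ht
          rw [Real.rpow_add ht0, ← mul_assoc, ENNReal.ofReal_mul (by positivity)]
          gcongr
          exact (hT t (le_of_lt ht)).1
      _ < ⊤ := hint.lintegral_lt_top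

/-! ### The superlevel set estimate -/

/-- Superlevel sets of a function vanishing a.e. outside `Ω` are contained in `Ω` up to a null
set. -/
lemma volume_superlevel_inter {N : ℕ} {Ω : Set (EuclideanSpace ℝ (Fin N))}
    (hΩ : MeasurableSet Ω) {u : EuclideanSpace ℝ (Fin N) → ℝ}
    (hu0 : ∀ᵐ x ∂(volume.restrict Ωᶜ), u x = 0) {t : ℝ} (ht : 0 ≤ t) :
    volume ({x | t < |u x|} ∩ Ω) = volume {x | t < |u x|} := by
  refine measure_congr ?_
  rw [ae_restrict_iff' hΩ.compl] at hu0
  filter_upwards [hu0] with x hx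
  refine propext ⟨fun h => h.1, fun h => ⟨h, ?_⟩⟩
  by_contra hxΩ
  have h' : t < |u x| := h
  rw [hx hxΩ, abs_zero] at h'
  linarith

/-- If `{|u| > t}` has at most half the measure of a ball of radius `ρ`, then every point `x` of
`{|u| > 2t}` has within distance `ρ` a set of points `y` of measure at least half that of the ball
on which `|u(x) - u(y)| ≥ t`. Integrating the
Gagliardo kernel over these pairs bounds the measure of `{|u| > 2t}`. -/
lemma superlevel_estimate {N : ℕ} (hN : 0 < N) {Ω : Set (EuclideanSpace ℝ (Fin N))}
    (hΩ : MeasurableSet Ω) (hfin : volume Ω < ⊤) {s : ℝ} (hs : 0 < s)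
    {p : EuclideanSpace ℝ (Fin N) × EuclideanSpace ℝ (Fin N) → ℝ}
    {u : EuclideanSpace ℝ (Fin N) → ℝ} (hu : Measurable u)
    (hu0 : ∀ᵐ x ∂(volume.restrict Ωᶜ), u x = 0) (hK : gagRho Ω s p u < ⊤)
    {P r : ℝ} (hP : 0 < P) (hr1 : r ≤ 1)
    (hp : ∀ x ∈ Ω, ∀ y, dist y x ≤ r → P ≤ p (x, y))
    (t ρ : ℝ) (ht : 1 ≤ t) (hρ : 0 < ρ) (hρr : ρ ≤ r)
    (hhalf : 2 * volume.real {x | t < |u x|} ≤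
      volume.real (Metric.ball (0 : EuclideanSpace ℝ (Fin N)) 1) * ρ ^ N) :
    volume.real {x | 2 * t < |u x|} ≤
      2 * (gagRho Ω s p u).toReal /
          volume.real (Metric.ball (0 : EuclideanSpace ℝ (Fin N)) 1) *
        (t ^ (-P) * ρ ^ (s * P)) := by
  have : Nonempty (Fin N) := ⟨⟨0, hN⟩⟩
  set ω := volume.real (Metric.ball (0 : EuclideanSpace ℝ (Fin N)) 1) with hω
  have hωtop : volume (Metric.ball (0 : EuclideanSpace ℝ (Fin N)) 1) ≠ ⊤ :=
    measure_ball_lt_top.ne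
  have hω0 : 0 < ω :=
    ENNReal.toReal_pos (Metric.measure_ball_pos volume _ one_pos).ne' hωtop
  have ht0 : 0 < t := by linarith
  have hDmeas : ∀ a : ℝ, MeasurableSet {x | a < |u x|} := fun a =>
    measurableSet_lt measurable_const hu.abs
  have hDfin : ∀ a : ℝ, 0 ≤ a → volume {x | a < |u x|} ≠ ⊤ := by
    intro a ha
    rw [← volume_superlevel_inter hΩ hu0 ha]
    exact (measure_mono inter_subset_right).trans_lt hfin |>.ne
  have hball : ∀ x : EuclideanSpace ℝ (Fin N),
      volume (Metric.ball x ρ) = ENNReal.ofReal (ω * ρ ^ N) := by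
    intro x
    rw [Measure.addHaar_ball volume x hρ.le, finrank_euclideanSpace_fin, mul_comm ω,
      ENNReal.ofReal_mul (by positivity), hω, ofReal_measureReal hωtop]
  have hsec : ∀ x : EuclideanSpace ℝ (Fin N),
      ENNReal.ofReal (ω * ρ ^ N / 2) ≤ volume (Metric.ball x ρ \ {y | t < |u y|}) := by
    intro x
    refine le_trans ?_ le_measure_sdiff
    rw [hball, ← ofReal_measureReal (hDfin t ht0.le), ← ENNReal.ofReal_sub _ measureReal_nonneg]
    exact ENNReal.ofReal_le_ofReal (by linarith)
  set S : Set (EuclideanSpace ℝ (Fin N) × EuclideanSpace ℝ (Fin N)) :=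
    {z | (z.1 ∈ {x | 2 * t < |u x|} ∩ Ω) ∧ z.2 ∈ Metric.ball z.1 ρ \ {y | t < |u y|}} with hS
  have hSmeas : MeasurableSet S := by
    refine ((measurable_fst ((hDmeas _).inter hΩ))).inter ?_
    refine MeasurableSet.diff ?_ (measurable_snd (hDmeas t))
    exact measurableSet_lt (measurable_snd.dist measurable_fst) measurable_const
  have hSvol : volume {x | 2 * t < |u x|} * ENNReal.ofReal (ω * ρ ^ N / 2) ≤ volume S := by
    rw [Measure.volume_eq_prod, Measure.prod_apply hSmeas,
      ← volume_superlevel_inter hΩ hu0 (by positivity : (0:ℝ) ≤ 2 * t), mul_comm,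
      ← setLIntegral_const]
    refine le_trans (setLIntegral_mono' ((hDmeas _).inter hΩ) (g := fun x =>
      volume (Prod.mk x ⁻¹' S)) fun x hx => (hsec x).trans (measure_mono ?_))
      (setLIntegral_le_lintegral _ _)
    intro y hy
    exact ⟨hx, hy⟩
  set c := t ^ P / ρ ^ ((N : ℝ) + s * P) with hc
  have hc0 : 0 < c := by positivity
  have hlow : ∀ z ∈ S, ENNReal.ofReal c ≤ ENNReal.ofReal
      (|u z.1 - u z.2| ^ p z / ‖z.1 - z.2‖ ^ ((N : ℝ) + s * p z)) := by
    rintro ⟨x, y⟩ ⟨⟨hx, hxΩ⟩, hy, hyt⟩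
    simp only [mem_ofPred_eq, not_lt, Metric.mem_ball] at hx hy hyt
    refine ENNReal.ofReal_le_ofReal ?_
    have hd : t ≤ |u x - u y| := by
      have := abs_sub_abs_le_abs_sub (u x) (u y)
      linarith
    have hne : x ≠ y := by
      rintro rfl
      simp at hd; linarith
    have hpP := hp x hxΩ y (hy.le.trans hρr)
    have hn0 : 0 < ‖x - y‖ := norm_pos_iff.2 (sub_ne_zero.2 hne)
    have hnρ : ‖x - y‖ ≤ ρ := by rw [← dist_eq_norm, dist_comm]; exact hy.le
    have hp0 : 0 < p (x, y) := hP.trans_le hpP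
    show c ≤ |u x - u y| ^ p (x, y) / ‖x - y‖ ^ ((N : ℝ) + s * p (x, y))
    have h1 : t ^ P ≤ |u x - u y| ^ p (x, y) :=
      (Real.rpow_le_rpow_of_exponent_le ht hpP).trans (Real.rpow_le_rpow ht0.le hd hp0.le)
    have h2 : ‖x - y‖ ^ ((N : ℝ) + s * p (x, y)) ≤ ρ ^ ((N : ℝ) + s * P) := by
      refine (Real.rpow_le_rpow hn0.le hnρ (by positivity)).trans ?_
      exact Real.rpow_le_rpow_of_exponent_ge hρ (hρr.trans hr1) (by gcongr)
    exact div_le_div₀ (by positivity) h1 (by positivity) h2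
  have hSQ : S ⊆ Qset Ω := by
    rintro ⟨x, y⟩ ⟨⟨_, hxΩ⟩, _⟩ h
    exact h.1 hxΩ
  have hmain : ENNReal.ofReal c * (volume {x | 2 * t < |u x|} * ENNReal.ofReal (ω * ρ ^ N / 2)) ≤
      gagRho Ω s p u := by
    calc _ ≤ ENNReal.ofReal c * volume S := by gcongr
      _ = ∫⁻ _ in S, ENNReal.ofReal c := (setLIntegral_const _ _).symm
      _ ≤ _ := setLIntegral_mono' hSmeas hlow
      _ ≤ _ := lintegral_mono_set hSQ
  have hreal := ENNReal.toReal_mono hK.ne hmain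
  rw [ENNReal.toReal_mul, ENNReal.toReal_mul, ENNReal.toReal_ofReal hc0.le,
    ENNReal.toReal_ofReal (by positivity)] at hreal
  change c * (volume.real {x | 2 * t < |u x|} * (ω * ρ ^ N / 2)) ≤ _ at hreal
  set M := volume.real {x | 2 * t < |u x|}
  have hcc : c * (M * (ω * ρ ^ N / 2)) = M * (ω / 2 * (t ^ P / ρ ^ (s * P))) := by
    rw [hc, Real.rpow_add hρ, Real.rpow_natCast]
    have := pow_pos hρ N
    have := Real.rpow_pos_of_pos hρ (s * P)
    field_simp
  rw [hcc, ← le_div_iff₀ (by positivity)] at hreal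
  refine hreal.trans (le_of_eq ?_)
  rw [Real.rpow_neg ht0.le]
  have := Real.rpow_pos_of_pos hρ (s * P)
  have := Real.rpow_pos_of_pos ht0 P
  field_simp

lemma tendsto_superlevel {N : ℕ} {Ω : Set (EuclideanSpace ℝ (Fin N))}
    (hΩ : MeasurableSet Ω) (hfin : volume Ω < ⊤)
    {u : EuclideanSpace ℝ (Fin N) → ℝ} (hu : Measurable u)
    (hu0 : ∀ᵐ x ∂(volume.restrict Ωᶜ), u x = 0) :
    Tendsto (fun t : ℝ => volume.real {x | t < |u x|}) atTop (nhds 0) := by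
  have hD : ∀ a : ℝ, 0 ≤ a → volume {x | a < |u x|} ≠ ⊤ := by
    intro a ha
    rw [← volume_superlevel_inter hΩ hu0 ha]
    exact (measure_mono inter_subset_right).trans_lt hfin |>.ne
  have h := tendsto_measure_iInter_atTop (μ := volume) (s := fun t : ℝ => {x | t < |u x|})
    (fun t => (measurableSet_lt measurable_const hu.abs).nullMeasurableSet)
    (fun a b hab x hx => lt_of_le_of_lt hab hx) ⟨0, hD 0 le_rfl⟩
  have he : (⋂ t : ℝ, {x | t < |u x|}) = ∅ := by
    ext x
    simp only [mem_iInter, mem_ofPred_eq, mem_empty_iff_false, iff_false, not_forall, not_lt]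
    exact ⟨_, le_rfl⟩
  rw [he, measure_empty] at h
  exact (ENNReal.tendsto_toReal ENNReal.zero_ne_top).comp h

/-- Subcritical fractional Sobolev embedding: finite modular implies `|u|^Q` integrable on `Ω`
when `p(x, y) ≥ P` near the diagonal and `Q` is below the critical exponent `N P / (N - s P)`. -/
lemma lintegral_rpow_lt_top {N : ℕ} (hN : 0 < N) {Ω : Set (EuclideanSpace ℝ (Fin N))}
    (hΩ : MeasurableSet Ω) (hfin : volume Ω < ⊤) {s : ℝ} (hs : 0 < s)
    {p : EuclideanSpace ℝ (Fin N) × EuclideanSpace ℝ (Fin N) → ℝ}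
    {u : EuclideanSpace ℝ (Fin N) → ℝ} (hu : Measurable u)
    (hu0 : ∀ᵐ x ∂(volume.restrict Ωᶜ), u x = 0) (hK : gagRho Ω s p u < ⊤)
    {P r Q : ℝ} (hP : 0 < P) (hr : 0 < r) (hr1 : r ≤ 1)
    (hp : ∀ x ∈ Ω, ∀ y, dist y x ≤ r → P ≤ p (x, y)) (hsP : s * P ≤ N)
    (hQ1 : 1 ≤ Q) (hQ : Q < P + s * P / N * Q) :
    ∫⁻ x in Ω, ENNReal.ofReal (|u x| ^ Q) < ⊤ := by
  have : Nonempty (Fin N) := ⟨⟨0, hN⟩⟩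
  have hω0 : 0 < volume.real (Metric.ball (0 : EuclideanSpace ℝ (Fin N)) 1) :=
    ENNReal.toReal_pos (Metric.measure_ball_pos volume _ one_pos).ne' measure_ball_lt_top.ne
  obtain ⟨b, A, hb, hA, h⟩ := exists_decay hN hω0 hr
    (by positivity) hP (by positivity) hsP
    (superlevel_estimate hN hΩ hfin hs hu hu0 hK hP hr1 hp)
    (tendsto_superlevel hΩ hfin hu hu0) hQ
  have : IsFiniteMeasure (volume.restrict Ω) := ⟨by simpa using hfin⟩
  refine lintegral_rpow_lt_top_of_decay hu hQ1 hb hA ?_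
  filter_upwards [h, eventually_ge_atTop 0] with t ht ht0
  rw [Measure.restrict_apply (measurableSet_lt measurable_const hu.abs),
    volume_superlevel_inter hΩ hu0 ht0]
  refine (ENNReal.le_ofReal_iff_toReal_le ?_ (by positivity)).2 ht
  rw [← volume_superlevel_inter hΩ hu0 ht0]
  exact (measure_mono inter_subset_right).trans_lt hfin |>.ne

/-! ### The domain `Q` and the Gagliardo kernel -/

lemma isOpen_Qset {N : ℕ} {Ω : Set (EuclideanSpace ℝ (Fin N))} (hΩ : IsOpen Ω) :
    IsOpen (Qset Ω) :=
  (hΩ.isClosed_compl.prod hΩ.isClosed_compl).isOpen_compl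

lemma mem_closure_Qset {N : ℕ} {Ω : Set (EuclideanSpace ℝ (Fin N))}
    {x : EuclideanSpace ℝ (Fin N)} (hx : x ∈ closure Ω) (y : EuclideanSpace ℝ (Fin N)) :
    (x, y) ∈ closure (Qset Ω) := by
  have hsub : Ω ×ˢ (univ : Set (EuclideanSpace ℝ (Fin N))) ⊆ Qset Ω :=
    fun z hz h => h.1 hz.1
  refine closure_mono hsub ?_
  rw [closure_prod_eq]
  exact ⟨hx, by simp⟩

/-- A strict lower bound for `p` on the diagonal over `closure Ω` persists, with a slightly larger
constant `P`, uniformly near the diagonal. -/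
lemma exists_near_diagonal {N : ℕ} {Ω : Set (EuclideanSpace ℝ (Fin N))}
    (hbd : Bornology.IsBounded Ω) (hne : (closure Ω).Nonempty)
    {p : EuclideanSpace ℝ (Fin N) × EuclideanSpace ℝ (Fin N) → ℝ}
    (hpc : ContinuousOn p (closure (Qset Ω))) {θ : ℝ} (hθ : ∀ x ∈ closure Ω, θ < p (x, x)) :
    ∃ P r : ℝ, θ < P ∧ (∀ x ∈ closure Ω, P ≤ p (x, x)) ∧ 0 < r ∧ r ≤ 1 ∧
      ∀ x ∈ closure Ω, ∀ y, dist y x ≤ r → P ≤ p (x, y) := by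
  have hcpt : IsCompact (closure Ω) := hbd.isCompact_closure
  have hdiag : ContinuousOn (fun x => p (x, x)) (closure Ω) :=
    hpc.comp (by fun_prop) fun x hx => mem_closure_Qset hx x
  obtain ⟨x₁, hx₁, hmin⟩ := hcpt.exists_isMinOn hne hdiag
  have hmin' : ∀ x ∈ closure Ω, p (x₁, x₁) ≤ p (x, x) := fun x hx => hmin hx
  have hgap := hθ x₁ hx₁
  have hcpt2 : IsCompact (closure Ω ×ˢ Metric.cthickening 1 (closure Ω)) :=
    hcpt.prod hcpt.cthickening
  have huc := hcpt2.uniformContinuousOn_of_continuous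
    (hpc.mono fun z hz => mem_closure_Qset hz.1 z.2)
  obtain ⟨δ, hδ, hδp⟩ := Metric.uniformContinuousOn_iff.1 huc ((p (x₁, x₁) - θ) / 2)
    (by linarith)
  refine ⟨(p (x₁, x₁) + θ) / 2, min 1 (δ / 2), by linarith,
    fun x hx => by linarith [hmin' x hx], by positivity, min_le_left _ _, ?_⟩
  intro x hx y hy
  have hy1 : y ∈ Metric.cthickening 1 (closure Ω) :=
    Metric.mem_cthickening_of_dist_le y x 1 _ hx (hy.trans (min_le_left _ _))
  have h := hδp (x, x) ⟨hx, Metric.self_subset_cthickening _ hx⟩ (x, y) ⟨hx, hy1⟩ (by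
    rw [Prod.dist_eq, dist_self, dist_comm x y]
    refine max_lt hδ (hy.trans_lt ((min_le_right _ _).trans_lt (by linarith))))
  rw [Real.dist_eq, abs_lt] at h
  linarith [hmin' x hx]

lemma integrable_kernel {N : ℕ} {Ω : Set (EuclideanSpace ℝ (Fin N))} {s pm pp : ℝ}
    {p : EuclideanSpace ℝ (Fin N) × EuclideanSpace ℝ (Fin N) → ℝ}
    {u : EuclideanSpace ℝ (Fin N) → ℝ} (hum : Measurable u)
    (hpmeas : AEMeasurable p (volume.restrict (Qset Ω))) (hpm : 0 ≤ pm)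
    (hpae : ∀ᵐ z ∂(volume.restrict (Qset Ω)), pm ≤ p z ∧ p z ≤ pp)
    (hlu : ∃ l : ℝ, 0 < l ∧ gagModularOn (Qset Ω) s p l u < ⊤) :
    Integrable (fun z => |u z.1 - u z.2| ^ p z / ‖z.1 - z.2‖ ^ ((N : ℝ) + s * p z))
      (volume.restrict (Qset Ω)) := by
  obtain ⟨l, hl, hfin⟩ := hlu
  have hdiff : Measurable fun z : EuclideanSpace ℝ (Fin N) × EuclideanSpace ℝ (Fin N) =>
      |u z.1 - u z.2| :=
    ((hum.comp measurable_fst).sub (hum.comp measurable_snd)).abs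
  have hmeas : AEMeasurable (fun z : EuclideanSpace ℝ (Fin N) × EuclideanSpace ℝ (Fin N) =>
      |u z.1 - u z.2| ^ p z / (l ^ p z * ‖z.1 - z.2‖ ^ ((N : ℝ) + s * p z)))
      (volume.restrict (Qset Ω)) := by
    refine (hdiff.aemeasurable.pow hpmeas).div ((hpmeas.const_pow l).mul ?_)
    exact AEMeasurable.pow (by fun_prop) ((hpmeas.const_mul s).const_add _)
  have hint : Integrable (fun z : EuclideanSpace ℝ (Fin N) × EuclideanSpace ℝ (Fin N) =>
      |u z.1 - u z.2| ^ p z / (l ^ p z * ‖z.1 - z.2‖ ^ ((N : ℝ) + s * p z)))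
      (volume.restrict (Qset Ω)) :=
    ⟨hmeas.aestronglyMeasurable,
      (hasFiniteIntegral_iff_ofReal (ae_of_all _ fun z => by positivity)).2 hfin⟩
  have h := hint.bdd_mul (c := 1 + l ^ pp) (f := fun z => l ^ p z)
    (hpmeas.const_pow l).aestronglyMeasurable ?_
  · refine h.congr (ae_of_all _ fun z => ?_)
    have := Real.rpow_pos_of_pos hl (p z)
    simp only
    rw [← div_div, div_right_comm, mul_div_cancel₀ _ this.ne']
  · filter_upwards [hpae] with z hz
    rw [Real.norm_of_nonneg (Real.rpow_nonneg hl.le _)]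
    exact FibreTerm.rpow_le hl.le le_rfl (hpm.trans hz.1) hz.2

/-- If the modular of `u` vanished, `u` would agree a.e. on `Ω` with its value `0` outside. -/
lemma kernel_integral_pos {N : ℕ} (hN : 0 < N) {Ω : Set (EuclideanSpace ℝ (Fin N))} {s : ℝ}
    (hΩm : MeasurableSet Ω) (hfin : volume Ω < ⊤)
    {p : EuclideanSpace ℝ (Fin N) × EuclideanSpace ℝ (Fin N) → ℝ}
    {u : EuclideanSpace ℝ (Fin N) → ℝ}
    (hu0 : ∀ᵐ x ∂(volume.restrict Ωᶜ), u x = 0)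
    (hne : ¬ u =ᵐ[volume] (0 : EuclideanSpace ℝ (Fin N) → ℝ))
    (hint : Integrable (fun z => |u z.1 - u z.2| ^ p z / ‖z.1 - z.2‖ ^ ((N : ℝ) + s * p z))
      (volume.restrict (Qset Ω))) :
    0 < ∫ z in Qset Ω, |u z.1 - u z.2| ^ p z / ‖z.1 - z.2‖ ^ ((N : ℝ) + s * p z) := by
  have : Nonempty (Fin N) := ⟨⟨0, hN⟩⟩
  refine lt_of_le_of_ne (integral_nonneg fun z => by positivity) fun h0 => hne ?_
  have hz := (integral_eq_zero_iff_of_nonneg (fun z => by positivity) hint).1 h0.symm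
  have heq : ∀ᵐ z ∂(volume.restrict (Qset Ω)), u z.1 = u z.2 := by
    filter_upwards [hz] with z hz
    by_contra hne'
    have h1 : 0 < |u z.1 - u z.2| := abs_pos.2 (sub_ne_zero.2 hne')
    have h2 : 0 < ‖z.1 - z.2‖ := norm_pos_iff.2 (sub_ne_zero.2 fun h => hne' (by rw [h]))
    have : 0 < |u z.1 - u z.2| ^ p z / ‖z.1 - z.2‖ ^ ((N : ℝ) + s * p z) := by positivity
    exact this.ne' hz
  have hsub : Ω ×ˢ Ωᶜ ⊆ Qset Ω := fun z hz h => h.1 hz.1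
  have heq2 := ae_restrict_of_ae_restrict_of_subset hsub heq
  rw [Measure.volume_eq_prod, ← Measure.prod_restrict] at heq2
  have h3 := Measure.ae_ae_of_ae_prod heq2
  have hcompl : (volume.restrict Ωᶜ : Measure (EuclideanSpace ℝ (Fin N))) ≠ 0 := by
    intro h
    rw [Measure.restrict_eq_zero] at h
    have := measure_add_measure_compl (μ := volume) hΩm
    rw [h, add_zero, measure_univ_of_isAddLeftInvariant] at this
    exact hfin.ne this
  have : (ae (volume.restrict Ωᶜ : Measure (EuclideanSpace ℝ (Fin N)))).NeBot :=
    ae_neBot.2 hcompl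
  have h4 : ∀ᵐ x ∂(volume.restrict Ω), u x = 0 := by
    filter_upwards [h3] with x hx
    obtain ⟨y, hy1, hy2⟩ := (hx.and hu0).exists
    exact hy1.trans hy2
  exact ae_of_ae_restrict_of_ae_restrict_compl _ h4 hu0

/-! ### The Nehari fibre -/

/-- unique maximizer on each fibre of the Nehari manifold. -/
theorem statement_14 {N : ℕ} (Ω : Set (EuclideanSpace ℝ (Fin N))) (hΩ : IsOpen Ω)
    (hbd : Bornology.IsBounded Ω)
    (s : ℝ) (hs0 : 0 < s) (hs1 : s < 1)
    (p : EuclideanSpace ℝ (Fin N) × EuclideanSpace ℝ (Fin N) → ℝ)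
    (hpc : ContinuousOn p (closure (Qset Ω)))
    (hpsym : ∀ z ∈ closure (Qset Ω), p z = p (z.2, z.1))
    (pm pp : ℝ)
    (hpm : IsLeast (p '' closure (Qset Ω)) pm)
    (hpp : IsGreatest (p '' closure (Qset Ω)) pp)
    (h2pm : 2 ≤ pm) (hspN : s * pp < (N : ℝ))
    (q : EuclideanSpace ℝ (Fin N) → ℝ) (hqc : ContinuousOn q (closure Ω))
    (qm qp : ℝ) (hqm : IsLeast (q '' closure Ω) qm)
    (hqp : IsGreatest (q '' closure Ω) qp)
    (hpq : pp < qm)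
    (hcrit : ∀ x ∈ closure Ω, qp < (N : ℝ) * p (x, x) / ((N : ℝ) - s * p (x, x)) / 2 + 1)
    (u : EuclideanSpace ℝ (Fin N) → ℝ) (hu : MemW0 Ω s p u)
    (hne : ¬ u =ᵐ[volume] (0 : EuclideanSpace ℝ (Fin N) → ℝ)) :
    ∃! l : ℝ, 0 < l ∧ nehariI Ω s p q (fun x => l * u x) = 0 ∧
      ∀ t : ℝ, 0 ≤ t →
        energyE Ω s p q (fun x => t * u x) ≤ energyE Ω s p q (fun x => l * u x) := by
  have hΩm : MeasurableSet Ω := hΩ.measurableSet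
  have hfin : volume Ω < ⊤ := hbd.measure_lt_top
  have hQo := isOpen_Qset hΩ
  have hpQ : ∀ z ∈ closure (Qset Ω), pm ≤ p z ∧ p z ≤ pp := fun z hz =>
    ⟨hpm.2 ⟨z, hz, rfl⟩, hpp.2 ⟨z, hz, rfl⟩⟩
  have hqΩ : ∀ x ∈ closure Ω, qm ≤ q x ∧ q x ≤ qp := fun x hx =>
    ⟨hqm.2 ⟨x, hx, rfl⟩, hqp.2 ⟨x, hx, rfl⟩⟩
  obtain ⟨x₀, hx₀, -⟩ := id hqm.1
  have hpmpp : pm ≤ pp :=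
    (hpQ _ (mem_closure_Qset hx₀ x₀)).1.trans (hpQ _ (mem_closure_Qset hx₀ x₀)).2
  have hqmqp : qm ≤ qp := (hqΩ x₀ hx₀).1.trans (hqΩ x₀ hx₀).2
  have hNR : (0 : ℝ) < N := lt_of_le_of_lt (by nlinarith) hspN
  have hN : 0 < N := by exact_mod_cast hNR
  have hpmeas : AEMeasurable p (volume.restrict (Qset Ω)) :=
    (hpc.mono subset_closure).aemeasurable hQo.measurableSet
  have hqmeas : AEMeasurable q (volume.restrict Ω) :=
    (hqc.mono subset_closure).aemeasurable hΩm
  have hpae : ∀ᵐ z ∂(volume.restrict (Qset Ω)), pm ≤ p z ∧ p z ≤ pp :=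
    (ae_restrict_iff' hQo.measurableSet).2 (ae_of_all _ fun z hz => hpQ z (subset_closure hz))
  have hqae : ∀ᵐ x ∂(volume.restrict Ω), qm ≤ q x ∧ q x ≤ qp :=
    (ae_restrict_iff' hΩm).2 (ae_of_all _ fun x hx => hqΩ x (subset_closure hx))
  obtain ⟨hum, hu0, hlu⟩ := hu
  set A : EuclideanSpace ℝ (Fin N) × EuclideanSpace ℝ (Fin N) → ℝ :=
    fun z => |u z.1 - u z.2| ^ p z / ‖z.1 - z.2‖ ^ ((N : ℝ) + s * p z) with hA
  have hA0 : ∀ z, 0 ≤ A z := fun z => by positivity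
  have hAint : Integrable A (volume.restrict (Qset Ω)) :=
    integrable_kernel hum hpmeas (by linarith) hpae hlu
  have hK : gagRho Ω s p u < ⊤ :=
    (hasFiniteIntegral_iff_ofReal (ae_of_all _ hA0)).1 hAint.2
  -- the growth assumption in the form used by the embedding: `qp` is below the critical exponent
  have hθ : ∀ x ∈ closure Ω, qp / (1 + s * qp / N) < p (x, x) := by
    intro x hx
    have h1 := hcrit x hx
    have h2 := hpQ _ (mem_closure_Qset hx x)
    have h3 : 0 < (N : ℝ) - s * p (x, x) := by nlinarith
    have h4 : 2 ≤ (N : ℝ) * p (x, x) / (N - s * p (x, x)) := by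
      rw [le_div_iff₀ h3]; nlinarith
    have h5 : qp < (N : ℝ) * p (x, x) / (N - s * p (x, x)) := by linarith
    rw [lt_div_iff₀ h3] at h5
    have hqp0 : 0 < qp := by linarith
    rw [div_lt_iff₀ (by positivity)]
    have : p (x, x) * (1 + s * qp / N) = (N * p (x, x) + s * qp * p (x, x)) / N := by
      field_simp
    rw [this, lt_div_iff₀ hNR]
    nlinarith
  obtain ⟨P, r, hθP, hPd, hr, hr1, hPr⟩ :=
    exists_near_diagonal hbd ⟨x₀, hx₀⟩ hpc hθ
  have hqp0 : 0 < qp := by linarith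
  have hP0 : 0 < P := lt_trans (by positivity) hθP
  have hPpp' : P ≤ pp := (hPd x₀ hx₀).trans (hpQ _ (mem_closure_Qset hx₀ x₀)).2
  have hLq : ∫⁻ x in Ω, ENNReal.ofReal (|u x| ^ qp) < ⊤ := by
    refine lintegral_rpow_lt_top hN hΩm hfin hs0 hum hu0 hK hP0 hr hr1
      (fun x hx y hy => hPr x (subset_closure hx) y hy) (by nlinarith) (by linarith) ?_
    rw [div_lt_iff₀ (by positivity)] at hθP
    calc qp < P * (1 + s * qp / N) := hθP
      _ = _ := by ring
  set B : EuclideanSpace ℝ (Fin N) → ℝ := fun x => |u x| ^ q x with hB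
  have hB0 : ∀ x, 0 ≤ B x := fun x => by positivity
  have hBint : Integrable B (volume.restrict Ω) := by
    have : IsFiniteMeasure (volume.restrict Ω) := ⟨by simpa using hfin⟩
    have hI : Integrable (fun x => |u x| ^ qp) (volume.restrict Ω) :=
      ⟨(hum.abs.pow_const qp).aestronglyMeasurable,
        (hasFiniteIntegral_iff_ofReal (ae_of_all _ fun x => by positivity)).2 hLq⟩
    refine ((integrable_const (1 : ℝ)).add hI).mono'
      ((hum.abs.aemeasurable.pow hqmeas).aestronglyMeasurable) ?_
    filter_upwards [hqae] with x hx
    rw [Real.norm_of_nonneg (hB0 x)]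
    exact FibreTerm.rpow_le (abs_nonneg _) le_rfl (by linarith) hx.2
  have hApos : 0 < ∫ z in Qset Ω, A z :=
    kernel_integral_pos hN hΩm hfin hu0 hne hAint
  have hBpos : 0 < ∫ x in Ω, B x := by
    rw [integral_pos_iff_support_of_nonneg_ae (ae_of_all _ hB0) hBint, pos_iff_ne_zero]
    intro h0
    apply hne
    have h1 : ∀ᵐ x ∂(volume.restrict Ω), u x = 0 := by
      have h2 : ∀ᵐ x ∂(volume.restrict Ω), B x = 0 := by
        rw [ae_iff]; exact h0
      filter_upwards [h2, hqae] with x hx hq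
      have := (Real.rpow_eq_zero_iff_of_nonneg (abs_nonneg _)).1 hx
      exact abs_eq_zero.1 this.1
    exact ae_of_ae_restrict_of_ae_restrict_compl _ h1 hu0
  have hTA : FibreTerm (volume.restrict (Qset Ω)) A p pm pp :=
    ⟨hA0, hAint, hApos, hpmeas, by linarith, hpae⟩
  have hTB : FibreTerm (volume.restrict Ω) B q qm qp :=
    ⟨hB0, hBint, hBpos, hqmeas, by linarith, hqae⟩
  have hk : ∀ (t : ℝ), 0 ≤ t → ∀ z : EuclideanSpace ℝ (Fin N) × EuclideanSpace ℝ (Fin N),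
      |t * u z.1 - t * u z.2| ^ p z = t ^ p z * |u z.1 - u z.2| ^ p z := by
    intro t ht z
    rw [← mul_sub, abs_mul, abs_of_nonneg ht, Real.mul_rpow ht (abs_nonneg _)]
  have hk' : ∀ (t : ℝ), 0 ≤ t → ∀ x, |t * u x| ^ q x = t ^ q x * B x := by
    intro t ht x
    rw [abs_mul, abs_of_nonneg ht, Real.mul_rpow ht (abs_nonneg _)]
  have hIeq : ∀ t : ℝ, 0 ≤ t → nehariI Ω s p q (fun x => t * u x) =
      (∫ z in Qset Ω, t ^ p z * A z) - ∫ x in Ω, t ^ q x * B x := by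
    intro t ht
    unfold nehariI rhoR
    simp only [hk t ht, hk' t ht, hA, mul_div_assoc]
  have hEeq : ∀ t : ℝ, 0 ≤ t → energyE Ω s p q (fun x => t * u x) =
      (∫ z in Qset Ω, t ^ p z * A z / p z) - ∫ x in Ω, t ^ q x * B x / q x := by
    intro t ht
    unfold energyE
    simp only [hk t ht, hk' t ht, hA]
    congr 2
    funext z
    rw [mul_comm (p z), ← div_div, mul_div_assoc]
  obtain ⟨l, hl, hbal⟩ := hTA.exists_balance hTB hpq
  refine ⟨l, ⟨hl, ?_, ?_⟩, ?_⟩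
  · rw [hIeq l hl.le, hbal, sub_self]
  · intro t ht
    rw [hEeq t ht, hEeq l hl.le]
    exact hTA.balance_max hTB hpq hl ht hbal (by linarith)
  · rintro l' ⟨hl', hI', -⟩
    rw [hIeq l' hl'.le, sub_eq_zero] at hI'
    exact le_antisymm (not_lt.1 (hTA.balance_not_lt hTB hpq hl hbal hI'))
      (not_lt.1 (hTA.balance_not_lt hTB hpq hl' hI' hbal))
end
end

section
/- Let Ω ⊂ ℝ^N be a bounded open set with smooth boundary, s ∈ (0,1), Q = ℝ^{2N} ∖ ((ℝ^N∖Ω) × (ℝ^N∖Ω)), let p : cl(Q) → ℝ be continuous and symmetric with 2 ≤ p⁻ ≤ p(x,y) ≤ p⁺ < ∞ and s p⁺ < N, and let q : cl(Ω) → ℝ be continuous with p⁺ < q⁻ ≤ q(x) ≤ q⁺ < p_s*(x)/2 + 1 for all x ∈ cl(Ω), where p̄(x) = p(x,x) and p_s*(x) = N p̄(x)/(N − s p̄(x)). Then the Nehari manifold 𝒩 = {u ∈ W₀ : u ≠ 0 and I(u) = 0} is nonempty, and for every u ∈ 𝒩, λ = 1 is the unique positive number satisfying I(λu) = 0 and E(λu)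 = max_{t ≥ 0} E(tu). -/
/-!
Along the ray `t ↦ t u` the energy and the Nehari functional become
`∫ (t ^ p / p) f - ∫ (t ^ q / q) g` and `∫ t ^ p f - ∫ t ^ q g`, where `f` is the Gagliardo density
of `u` on `Q` and `g = |u| ^ q` on `Ω`. On the Nehari manifold `∫ f = ∫ g`, and `∫ f > 0` because
`u` is nonzero and vanishes on the infinite-measure set `Ωᶜ`; in particular `g` is integrable there,
a non-integrable `g` having Bochner integral `0`.

*Maximality at `t = 1`* (`fibre_energy_le`). The function `r ↦ (1 - t ^ r) / r` is antitone by
Bernoulli's inequality. Comparing every `p` with `p⁺` and every `q` with `q⁻ > p⁺` gives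
`E(u) - E(tu) ≥ ((1 - t ^ p⁺) / p⁺ - (1 - t ^ q⁻) / q⁻) ∫ f ≥ 0`.

*Uniqueness* (`fibre_root_unique`). For `t > 1`, `∫ t ^ p f ≤ t ^ p⁺ ∫ f < t ^ q⁻ ∫ g ≤ ∫ t ^ q g`,
and the inequalities reverse for `t < 1`.

*Nonemptiness* (`exists_cone`, `fibre_root_exists`). A cone function supported in a small ball of
`Ω` lies in the space, since its density is dominated by a radial kernel integrable at the origin and
at infinity; the intermediate value theorem along its ray yields a point of the Nehari manifold.
-/

open MeasureTheory Filter Set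
open scoped ENNReal

noncomputable section

/-! ### Weighted integrals with a variable power of the scaling parameter -/

section Abstract

variable {X : Type*} [MeasurableSpace X] {μ : Measure X} {f p : X → ℝ} {a b : ℝ}

/-- For fixed `t ≥ 0` the map `r ↦ (1 - t ^ r) / r` is antitone; this is Bernoulli's inequality
applied to `t ^ a` with exponent `b / a`. -/
lemma one_sub_rpow_div_anti {t : ℝ} (ht : 0 ≤ t) (ha : 0 < a) (hab : a ≤ b) :
    (1 - t ^ b) / b ≤ (1 - t ^ a) / a := by
  have hb : 0 < b := ha.trans_le hab
  have hx : 0 ≤ t ^ a := Real.rpow_nonneg ht a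
  have h := one_add_mul_self_le_rpow_one_add (s := t ^ a - 1) (by linarith)
    (p := b / a) ((one_le_div ha).2 hab)
  have e : (1 + (t ^ a - 1)) ^ (b / a) = t ^ b := by
    rw [add_sub_cancel, ← Real.rpow_mul ht, mul_div_cancel₀ _ ha.ne']
  rw [e] at h
  rw [div_le_div_iff₀ hb ha]
  have h2 : a * (1 + b / a * (t ^ a - 1)) ≤ a * t ^ b := mul_le_mul_of_nonneg_left h ha.le
  have h3 : a * (1 + b / a * (t ^ a - 1)) = a + b * (t ^ a - 1) := by
    field_simp
  nlinarith

lemma rpow_le_max_one_rpow {t r : ℝ} (ht : 0 ≤ t) (hr : 0 ≤ r) (hrb : r ≤ b) :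
    t ^ r ≤ (max 1 t) ^ b :=
  (Real.rpow_le_rpow ht (le_max_right _ _) hr).trans
    (Real.rpow_le_rpow_of_exponent_le (le_max_left _ _) hrb)

lemma integrable_rpow_mul (hf : Integrable f μ) (hp : AEMeasurable p μ) (ha : 0 < a)
    (hab : ∀ᵐ x ∂μ, a ≤ p x ∧ p x ≤ b) {t : ℝ} (ht : 0 ≤ t) :
    Integrable (fun x => t ^ p x * f x) μ := by
  refine hf.bdd_mul (c := (max 1 t) ^ b) (aemeasurable_const.pow hp).aestronglyMeasurable ?_
  filter_upwards [hab] with x hx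
  rw [Real.norm_of_nonneg (Real.rpow_nonneg ht _)]
  exact rpow_le_max_one_rpow ht (ha.le.trans hx.1) hx.2

lemma integrable_rpow_div_mul (hf : Integrable f μ) (hp : AEMeasurable p μ) (ha : 0 < a)
    (hab : ∀ᵐ x ∂μ, a ≤ p x ∧ p x ≤ b) {t : ℝ} (ht : 0 ≤ t) :
    Integrable (fun x => t ^ p x / p x * f x) μ := by
  have h := (integrable_rpow_mul hf hp ha hab ht).bdd_mul (c := 1 / a) (f := fun x => (p x)⁻¹)
    hp.inv.aestronglyMeasurable ?_
  · refine h.congr (Eventually.of_forall fun x => ?_)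
    simp only [div_eq_mul_inv]
    ring
  · filter_upwards [hab] with x hx
    have : 0 < p x := ha.trans_le hx.1
    rw [Real.norm_of_nonneg (inv_nonneg.2 this.le), ← one_div]
    exact one_div_le_one_div_of_le ha hx.1

/-- Lower bound for the drop of a fibre energy term, in terms of the largest exponent. -/
lemma integral_rpow_div_add_le (hf : Integrable f μ) (h0 : ∀ x, 0 ≤ f x)
    (hp : AEMeasurable p μ) (ha : 0 < a)
    (hab : ∀ᵐ x ∂μ, a ≤ p x ∧ p x ≤ b) {t : ℝ} (ht : 0 ≤ t) :
    ∫ x, t ^ p x / p x * f x ∂μ + (1 - t ^ b) / b * ∫ x, f x ∂μ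
      ≤ ∫ x, (1 : ℝ) ^ p x / p x * f x ∂μ := by
  have h1 := integrable_rpow_div_mul hf hp ha hab ht
  rw [← integral_const_mul, ← integral_add h1 (hf.const_mul _)]
  refine integral_mono_ae (h1.add (hf.const_mul _))
    (integrable_rpow_div_mul hf hp ha hab zero_le_one) ?_
  filter_upwards [hab] with x hx
  have := one_sub_rpow_div_anti ht (ha.trans_le hx.1) hx.2
  rw [sub_div (1 : ℝ) _ (p x)] at this
  simp only [Real.one_rpow]
  have := mul_le_mul_of_nonneg_right this (h0 x)
  linarith

/-- Upper bound for the drop of a fibre energy term, in terms of the smallest exponent. -/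
lemma integral_rpow_div_le_add (hf : Integrable f μ) (h0 : ∀ x, 0 ≤ f x)
    (hp : AEMeasurable p μ) (ha : 0 < a)
    (hab : ∀ᵐ x ∂μ, a ≤ p x ∧ p x ≤ b) {t : ℝ} (ht : 0 ≤ t) :
    ∫ x, (1 : ℝ) ^ p x / p x * f x ∂μ ≤
      ∫ x, t ^ p x / p x * f x ∂μ + (1 - t ^ a) / a * ∫ x, f x ∂μ := by
  have h1 := integrable_rpow_div_mul hf hp ha hab ht
  rw [← integral_const_mul, ← integral_add h1 (hf.const_mul _)]
  refine integral_mono_ae (integrable_rpow_div_mul hf hp ha hab zero_le_one)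
    (h1.add (hf.const_mul _)) ?_
  filter_upwards [hab] with x hx
  have := one_sub_rpow_div_anti ht ha hx.1
  rw [sub_div (1 : ℝ) _ (p x)] at this
  simp only [Real.one_rpow]
  have := mul_le_mul_of_nonneg_right this (h0 x)
  linarith

lemma integral_rpow_mul_bounds_of_one_le (hf : Integrable f μ) (h0 : ∀ x, 0 ≤ f x)
    (hp : AEMeasurable p μ) (ha : 0 < a)
    (hab : ∀ᵐ x ∂μ, a ≤ p x ∧ p x ≤ b) {t : ℝ} (ht : 1 ≤ t) :
    t ^ a * ∫ x, f x ∂μ ≤ ∫ x, t ^ p x * f x ∂μ ∧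
      ∫ x, t ^ p x * f x ∂μ ≤ t ^ b * ∫ x, f x ∂μ := by
  have h1 := integrable_rpow_mul hf hp ha hab (zero_le_one.trans ht)
  rw [← integral_const_mul, ← integral_const_mul]
  constructor
  · refine integral_mono_ae (hf.const_mul _) h1 ?_
    filter_upwards [hab] with x hx
    exact mul_le_mul_of_nonneg_right (Real.rpow_le_rpow_of_exponent_le ht hx.1) (h0 x)
  · refine integral_mono_ae h1 (hf.const_mul _) ?_
    filter_upwards [hab] with x hx
    exact mul_le_mul_of_nonneg_right (Real.rpow_le_rpow_of_exponent_le ht hx.2) (h0 x)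

lemma integral_rpow_mul_bounds_of_le_one (hf : Integrable f μ) (h0 : ∀ x, 0 ≤ f x)
    (hp : AEMeasurable p μ) (ha : 0 < a)
    (hab : ∀ᵐ x ∂μ, a ≤ p x ∧ p x ≤ b) {t : ℝ} (ht0 : 0 < t) (ht : t ≤ 1) :
    t ^ b * ∫ x, f x ∂μ ≤ ∫ x, t ^ p x * f x ∂μ ∧
      ∫ x, t ^ p x * f x ∂μ ≤ t ^ a * ∫ x, f x ∂μ := by
  have h1 := integrable_rpow_mul hf hp ha hab ht0.le
  rw [← integral_const_mul, ← integral_const_mul]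
  constructor
  · refine integral_mono_ae (hf.const_mul _) h1 ?_
    filter_upwards [hab] with x hx
    exact mul_le_mul_of_nonneg_right (Real.rpow_le_rpow_of_exponent_ge ht0 ht hx.2) (h0 x)
  · refine integral_mono_ae h1 (hf.const_mul _) ?_
    filter_upwards [hab] with x hx
    exact mul_le_mul_of_nonneg_right (Real.rpow_le_rpow_of_exponent_ge ht0 ht hx.1) (h0 x)

lemma continuousOn_integral_rpow_mul (hf : Integrable f μ)
    (hp : AEMeasurable p μ) (ha : 0 < a)
    (hab : ∀ᵐ x ∂μ, a ≤ p x ∧ p x ≤ b) {c d : ℝ} (hc : 0 ≤ c) :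
    ContinuousOn (fun t : ℝ => ∫ x, t ^ p x * f x ∂μ) (Icc c d) := by
  refine continuousOn_of_dominated (bound := fun x => (max 1 d) ^ b * |f x|)
    (fun t ht => (integrable_rpow_mul hf hp ha hab (hc.trans ht.1)).aestronglyMeasurable)
    (fun t ht => ?_) (hf.abs.const_mul _) ?_
  · filter_upwards [hab] with x hx
    have ht0 := hc.trans ht.1
    rw [norm_mul, Real.norm_of_nonneg (Real.rpow_nonneg ht0 _), Real.norm_eq_abs]
    refine mul_le_mul_of_nonneg_right ?_ (abs_nonneg _)
    exact (Real.rpow_le_rpow ht0 ht.2 (ha.le.trans hx.1)).trans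
      (rpow_le_max_one_rpow (ht0.trans ht.2) (ha.le.trans hx.1) hx.2)
  · filter_upwards [hab] with x hx
    exact ((Real.continuous_rpow_const (ha.le.trans hx.1)).mul continuous_const).continuousOn

variable {Y : Type*} [MeasurableSpace Y] {ν : Measure Y} {g q : Y → ℝ} {c d : ℝ}

/-- If the two masses agree and all exponents `p` lie below all exponents `q`, the fibre energy
is maximal at `t = 1`. -/
lemma fibre_energy_le (hf : Integrable f μ) (hf0 : ∀ x, 0 ≤ f x) (hp : AEMeasurable p μ)
    (ha : 0 < a) (hab : ∀ᵐ x ∂μ, a ≤ p x ∧ p x ≤ b) (hb : 0 < b)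
    (hg : Integrable g ν) (hg0 : ∀ y, 0 ≤ g y) (hq : AEMeasurable q ν)
    (hcd : ∀ᵐ y ∂ν, c ≤ q y ∧ q y ≤ d) (hbc : b < c)
    (heq : ∫ x, f x ∂μ = ∫ y, g y ∂ν) {t : ℝ} (ht : 0 ≤ t) :
    ∫ x, t ^ p x / p x * f x ∂μ - ∫ y, t ^ q y / q y * g y ∂ν ≤
      ∫ x, (1 : ℝ) ^ p x / p x * f x ∂μ - ∫ y, (1 : ℝ) ^ q y / q y * g y ∂ν := by
  have h1 := integral_rpow_div_add_le hf hf0 hp ha hab ht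
  have h2 := integral_rpow_div_le_add hg hg0 hq (hb.trans hbc) hcd ht
  have h3 := mul_le_mul_of_nonneg_right (one_sub_rpow_div_anti ht hb hbc.le)
    (integral_nonneg (μ := μ) hf0)
  rw [← heq] at h2
  linarith

/-- The fibre Nehari equation has `1` as its only positive root when the masses agree and are
positive. -/
lemma fibre_root_unique (hf : Integrable f μ) (hf0 : ∀ x, 0 ≤ f x) (hp : AEMeasurable p μ)
    (ha : 0 < a) (hab : ∀ᵐ x ∂μ, a ≤ p x ∧ p x ≤ b) (hb : 0 < b)
    (hg : Integrable g ν) (hg0 : ∀ y, 0 ≤ g y) (hq : AEMeasurable q ν)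
    (hcd : ∀ᵐ y ∂ν, c ≤ q y ∧ q y ≤ d) (hbc : b < c)
    (heq : ∫ x, f x ∂μ = ∫ y, g y ∂ν) (hpos : 0 < ∫ x, f x ∂μ) {t : ℝ} (ht : 0 < t)
    (hroot : ∫ x, t ^ p x * f x ∂μ = ∫ y, t ^ q y * g y ∂ν) : t = 1 := by
  rcases lt_trichotomy t 1 with h | h | h
  · have h1 := (integral_rpow_mul_bounds_of_le_one hf hf0 hp ha hab ht h.le).1
    have h2 := (integral_rpow_mul_bounds_of_le_one hg hg0 hq (hb.trans hbc) hcd ht h.le).2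
    have h3 := mul_lt_mul_of_pos_right (Real.rpow_lt_rpow_of_exponent_gt ht h hbc) hpos
    rw [← heq] at h2
    linarith
  · exact h
  · have h1 := (integral_rpow_mul_bounds_of_one_le hf hf0 hp ha hab h.le).2
    have h2 := (integral_rpow_mul_bounds_of_one_le hg hg0 hq (hb.trans hbc) hcd h.le).1
    have h3 := mul_lt_mul_of_pos_right (Real.rpow_lt_rpow_of_exponent_lt h hbc) hpos
    rw [← heq] at h2
    linarith

/-- Existence of a positive root of the fibre Nehari equation. The threshold
`(A / B) ^ (1 / (c - b))`, where `A`, `B` are the two masses, and `1` bracket a sign change. -/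
lemma fibre_root_exists (hf : Integrable f μ) (hf0 : ∀ x, 0 ≤ f x) (hp : AEMeasurable p μ)
    (ha : 0 < a) (hab : ∀ᵐ x ∂μ, a ≤ p x ∧ p x ≤ b) (hb : 0 < b)
    (hg : Integrable g ν) (hg0 : ∀ y, 0 ≤ g y) (hq : AEMeasurable q ν)
    (hcd : ∀ᵐ y ∂ν, c ≤ q y ∧ q y ≤ d) (hbc : b < c)
    (hA : 0 < ∫ x, f x ∂μ) (hB : 0 < ∫ y, g y ∂ν) :
    ∃ t : ℝ, 0 < t ∧ ∫ x, t ^ p x * f x ∂μ = ∫ y, t ^ q y * g y ∂ν := by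
  set A := ∫ x, f x ∂μ with hAdef
  set B := ∫ y, g y ∂ν with hBdef
  have hc : 0 < c := hb.trans hbc
  have he : 0 < c - b := sub_pos.2 hbc
  set τ : ℝ := (A / B) ^ (1 / (c - b)) with hτ
  have hτ0 : 0 < τ := Real.rpow_pos_of_pos (div_pos hA hB) _
  have hτe : τ ^ (c - b) = A / B := by
    rw [hτ, ← Real.rpow_mul (div_pos hA hB).le, one_div_mul_cancel he.ne', Real.rpow_one]
  have key : ∀ t : ℝ, 0 < t → t ^ c * B = t ^ b * (t ^ (c - b) * B) := by
    intro t ht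
    rw [← mul_assoc, ← Real.rpow_add ht, add_sub_cancel]
  have hAB : A / B * B = A := div_mul_cancel₀ _ hB.ne'
  have hl0 : 0 < min τ 1 := lt_min hτ0 one_pos
  have hlow : 0 ≤ (∫ x, (min τ 1) ^ p x * f x ∂μ) - ∫ y, (min τ 1) ^ q y * g y ∂ν := by
    have h1 := (integral_rpow_mul_bounds_of_le_one hf hf0 hp ha hab hl0 (min_le_right _ _)).1
    have h2 := (integral_rpow_mul_bounds_of_le_one hg hg0 hq hc hcd hl0 (min_le_right _ _)).2
    rw [← hBdef, key _ hl0] at h2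
    have h3 : (min τ 1) ^ (c - b) * B ≤ A := by
      rw [← hAB, ← hτe]
      exact mul_le_mul_of_nonneg_right
        (Real.rpow_le_rpow hl0.le (min_le_left _ _) he.le) hB.le
    have h4 := mul_le_mul_of_nonneg_left h3 (Real.rpow_nonneg hl0.le b)
    linarith
  have hu0 : 0 < max τ 1 := lt_max_of_lt_left hτ0
  have hup : (∫ x, (max τ 1) ^ p x * f x ∂μ) - ∫ y, (max τ 1) ^ q y * g y ∂ν ≤ 0 := by
    have h1 := (integral_rpow_mul_bounds_of_one_le hf hf0 hp ha hab (le_max_right τ 1)).2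
    have h2 := (integral_rpow_mul_bounds_of_one_le hg hg0 hq hc hcd (le_max_right τ 1)).1
    rw [← hBdef, key _ hu0] at h2
    have h3 : A ≤ (max τ 1) ^ (c - b) * B := by
      rw [← hAB, ← hτe]
      exact mul_le_mul_of_nonneg_right
        (Real.rpow_le_rpow hτ0.le (le_max_left _ _) he.le) hB.le
    have h4 := mul_le_mul_of_nonneg_left h3 (Real.rpow_nonneg hu0.le b)
    linarith
  have hcont : ContinuousOn
      (fun t : ℝ => (∫ x, t ^ p x * f x ∂μ) - ∫ y, t ^ q y * g y ∂ν)
      (Icc (min τ 1) (max τ 1)) :=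
    (continuousOn_integral_rpow_mul hf hp ha hab hl0.le).sub
      (continuousOn_integral_rpow_mul hg hq hc hcd hl0.le)
  obtain ⟨t, ht, h⟩ := intermediate_value_Icc' min_le_max hcont ⟨hup, hlow⟩
  exact ⟨t, hl0.trans_le ht.1, sub_eq_zero.1 h⟩

end Abstract

/-! ### The Gagliardo modular -/

section Gagliardo

variable {N : ℕ} {Ω : Set (EuclideanSpace ℝ (Fin N))} {s : ℝ}
  {p : EuclideanSpace ℝ (Fin N) × EuclideanSpace ℝ (Fin N) → ℝ}
  {q : EuclideanSpace ℝ (Fin N) → ℝ} {u : EuclideanSpace ℝ (Fin N) → ℝ} {a b : ℝ}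

/-- The integrand of the Gagliardo modular. -/
def gagDensity (s : ℝ) (p : EuclideanSpace ℝ (Fin N) × EuclideanSpace ℝ (Fin N) → ℝ)
    (u : EuclideanSpace ℝ (Fin N) → ℝ)
    (z : EuclideanSpace ℝ (Fin N) × EuclideanSpace ℝ (Fin N)) : ℝ :=
  |u z.1 - u z.2| ^ p z / ‖z.1 - z.2‖ ^ ((N : ℝ) + s * p z)

lemma gagDensity_nonneg (z : EuclideanSpace ℝ (Fin N) × EuclideanSpace ℝ (Fin N)) :
    0 ≤ gagDensity s p u z := by
  unfold gagDensity
  positivity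

lemma nehariI_smul {t : ℝ} (ht : 0 ≤ t) :
    nehariI Ω s p q (fun x => t * u x) =
      (∫ z in Qset Ω, t ^ p z * gagDensity s p u z) - ∫ x in Ω, t ^ q x * |u x| ^ q x := by
  unfold nehariI rhoR gagDensity
  simp only [← mul_sub, abs_mul, abs_of_nonneg ht, Real.mul_rpow ht (abs_nonneg _), mul_div_assoc]

lemma energyE_smul {t : ℝ} (ht : 0 ≤ t) :
    energyE Ω s p q (fun x => t * u x) =
      (∫ z in Qset Ω, t ^ p z / p z * gagDensity s p u z) -
        ∫ x in Ω, t ^ q x / q x * |u x| ^ q x := by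
  unfold energyE gagDensity
  simp only [← mul_sub, abs_mul, abs_of_nonneg ht, Real.mul_rpow ht (abs_nonneg _),
    mul_div_mul_comm]
  simp only [mul_div_right_comm]

lemma measurableSet_Qset (hΩ : IsOpen Ω) : MeasurableSet (Qset Ω) :=
  (hΩ.measurableSet.compl.prod hΩ.measurableSet.compl).compl

lemma aemeasurable_gagDensity (hu : Measurable u)
    (hp : AEMeasurable p (volume.restrict (Qset Ω))) :
    AEMeasurable (gagDensity s p u) (volume.restrict (Qset Ω)) := by
  have h1 : Measurable fun z : EuclideanSpace ℝ (Fin N) × EuclideanSpace ℝ (Fin N) =>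
      |u z.1 - u z.2| := by
    have : Measurable fun z : EuclideanSpace ℝ (Fin N) × EuclideanSpace ℝ (Fin N) =>
      u z.1 - u z.2 := (hu.comp measurable_fst).sub (hu.comp measurable_snd)
    exact this.abs
  have h2 : Measurable fun z : EuclideanSpace ℝ (Fin N) × EuclideanSpace ℝ (Fin N) =>
      ‖z.1 - z.2‖ := (measurable_fst.sub measurable_snd).norm
  exact (h1.aemeasurable.pow hp).div
    (h2.aemeasurable.pow ((hp.const_mul s).const_add (N : ℝ)))

/-- Since the exponent is bounded, finiteness of the modular at one scale gives it at scale `1`. -/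
lemma MemW0.integrable_gagDensity (h : MemW0 Ω s p u)
    (hp : AEMeasurable p (volume.restrict (Qset Ω))) (ha : 0 < a)
    (hab : ∀ᵐ z ∂(volume.restrict (Qset Ω)), a ≤ p z ∧ p z ≤ b) :
    Integrable (gagDensity s p u) (volume.restrict (Qset Ω)) := by
  obtain ⟨hu, -, l, hl, hfin⟩ := h
  have hm := aemeasurable_gagDensity (s := s) hu hp
  have hm2 : AEMeasurable (fun z => gagDensity s p u z / l ^ p z) (volume.restrict (Qset Ω)) :=
    hm.div (aemeasurable_const.pow hp)
  have hint : Integrable (fun z => gagDensity s p u z / l ^ p z) (volume.restrict (Qset Ω)) := by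
    refine ⟨hm2.aestronglyMeasurable, ?_⟩
    rw [hasFiniteIntegral_iff_ofReal (Eventually.of_forall fun z =>
      div_nonneg (gagDensity_nonneg z) (Real.rpow_nonneg hl.le _))]
    refine lt_of_eq_of_lt ?_ hfin
    unfold gagModularOn gagDensity
    refine lintegral_congr fun z => ?_
    rw [div_div, mul_comm]
  refine (integrable_rpow_mul hint hp ha hab hl.le).congr (Eventually.of_forall fun z => ?_)
  exact mul_div_cancel₀ _ (Real.rpow_pos_of_pos hl _).ne'

lemma MemW0.smul (h : MemW0 Ω s p u) {t : ℝ} (ht : 0 < t) :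
    MemW0 Ω s p (fun x => t * u x) := by
  obtain ⟨hu, h0, l, hl, hfin⟩ := h
  refine ⟨hu.const_mul t, ?_, t * l, mul_pos ht hl, ?_⟩
  · filter_upwards [h0] with x hx
    rw [hx, mul_zero]
  · refine lt_of_eq_of_lt ?_ hfin
    unfold gagModularOn
    refine lintegral_congr fun z => ?_
    have := (Real.rpow_pos_of_pos ht (p z)).ne'
    rw [← mul_sub, abs_mul, abs_of_pos ht, Real.mul_rpow ht.le (abs_nonneg _),
      Real.mul_rpow ht.le hl.le, mul_assoc, mul_div_mul_left _ _ this]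

/-- The modular separates points: if it vanishes, `u` is a.e. equal on pairs in `Ω × Ωᶜ`, and
it is zero on `Ωᶜ`, which has infinite measure. -/
lemma MemW0.integral_gagDensity_pos (hN : 0 < N) (hbd : Bornology.IsBounded Ω)
    (h : MemW0 Ω s p u) (hne : ¬ u =ᵐ[volume] (0 : EuclideanSpace ℝ (Fin N) → ℝ))
    (hp : AEMeasurable p (volume.restrict (Qset Ω))) (ha : 0 < a)
    (hab : ∀ᵐ z ∂(volume.restrict (Qset Ω)), a ≤ p z ∧ p z ≤ b) :
    0 < ∫ z in Qset Ω, gagDensity s p u z := by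
  have hint := h.integrable_gagDensity hp ha hab
  refine lt_of_le_of_ne (integral_nonneg gagDensity_nonneg) fun h0 => hne ?_
  have hz := (integral_eq_zero_iff_of_nonneg gagDensity_nonneg hint).1 h0.symm
  have hQ : ∀ᵐ z ∂(volume.restrict (Qset Ω)), u z.1 = u z.2 := by
    filter_upwards [hz, hab] with z hz hpz
    have hp0 : p z ≠ 0 := (ha.trans_le hpz.1).ne'
    rcases div_eq_zero_iff.1 (show gagDensity s p u z = 0 from hz) with h | h
    · have := ((Real.rpow_eq_zero (abs_nonneg _) hp0).1 h)
      exact sub_eq_zero.1 (abs_eq_zero.1 this)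
    · have h' : ‖z.1 - z.2‖ = 0 := by
        by_contra hcon
        exact (Real.rpow_pos_of_pos (lt_of_le_of_ne (norm_nonneg _) (Ne.symm hcon)) _).ne' h
      rw [sub_eq_zero.1 (norm_eq_zero.1 h')]
  have hsub : Ω ×ˢ Ωᶜ ⊆ Qset Ω := fun z hz hz' => hz'.1 hz.1
  have hprod := ae_restrict_of_ae_restrict_of_subset hsub hQ
  rw [Measure.volume_eq_prod, ← Measure.prod_restrict] at hprod
  have hae := Measure.ae_ae_of_ae_prod hprod
  have : Nonempty (Fin N) := ⟨⟨0, hN⟩⟩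
  have hΩc : volume Ωᶜ ≠ 0 := by
    intro hc
    have h1 : volume (univ : Set (EuclideanSpace ℝ (Fin N))) ≤ volume Ω + volume Ωᶜ := by
      rw [← union_compl_self Ω]
      exact measure_union_le _ _
    rw [hc, add_zero, measure_univ_of_isAddLeftInvariant] at h1
    exact hbd.measure_lt_top.ne (top_le_iff.1 h1)
  have : NeBot (ae (volume.restrict Ωᶜ)) := ae_neBot.2 (by
    rwa [Ne, Measure.restrict_eq_zero])
  have hin : ∀ᵐ x ∂(volume.restrict Ω), u x = 0 := by
    filter_upwards [hae] with x hx
    obtain ⟨y, hy1, hy2⟩ := (hx.and h.2.1).exists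
    exact hy1.trans hy2
  exact ae_of_ae_restrict_of_ae_restrict_compl Ω hin h.2.1

end Gagliardo

/-! ### A cone function in the space -/

section Cone

variable {N : ℕ} {Ω : Set (EuclideanSpace ℝ (Fin N))} {s : ℝ}
  {p : EuclideanSpace ℝ (Fin N) × EuclideanSpace ℝ (Fin N) → ℝ} {a b : ℝ}

/-- A radial majorant of the Gagliardo density of a `1`-Lipschitz function with oscillation at
most `1`, when all exponents are at least `a`. -/
def coneKernel (N : ℕ) (s a : ℝ) (r : ℝ) : ℝ :=
  if r < 1 then r ^ (a * (1 - s) - N) else r ^ (-(N : ℝ) - s * a)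

lemma integrable_coneKernel (hN : 0 < N) (hs0 : 0 < s) (hs1 : s < 1) (ha : 0 < a) :
    Integrable (fun x : EuclideanSpace ℝ (Fin N) => coneKernel N s a ‖x‖) := by
  have : Nonempty (Fin N) := ⟨⟨0, hN⟩⟩
  rw [integrable_fun_norm_addHaar volume (f := coneKernel N s a), finrank_euclideanSpace_fin]
  have hpow : ∀ y : ℝ, 0 < y → y ^ (N - 1) = y ^ ((N : ℝ) - 1) := by
    intro y _
    rw [← Real.rpow_natCast, Nat.cast_sub hN, Nat.cast_one]
  have hsplit : Ioi (0 : ℝ) = Ioo 0 1 ∪ Ici 1 := (Ioo_union_Ici_eq_Ioi zero_lt_one).symm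
  rw [hsplit]
  refine IntegrableOn.union ?_ ?_
  · have h := (intervalIntegral.integrableOn_Ioo_rpow_iff (s := a * (1 - s) - 1) one_pos).2
      (by nlinarith [mul_pos ha (sub_pos.2 hs1)])
    refine h.congr_fun (fun y hy => ?_) measurableSet_Ioo
    simp only [coneKernel, if_pos hy.2, smul_eq_mul]
    rw [hpow y hy.1, ← Real.rpow_add hy.1]
    congr 1
    ring
  · rw [integrableOn_Ici_iff_integrableOn_Ioi]
    have h := integrableOn_Ioi_rpow_of_lt (a := -1 - s * a) (c := 1)
      (by nlinarith [mul_pos hs0 ha]) one_pos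
    refine h.congr_fun (fun y (hy : 1 < y) => ?_) measurableSet_Ioi
    have hy0 : 0 < y := one_pos.trans hy
    simp only [coneKernel, if_neg hy.not_gt, smul_eq_mul]
    rw [hpow y hy0, ← Real.rpow_add hy0]
    congr 1
    ring

lemma gag_integrand_le_coneKernel (hs0 : 0 < s) (hs1 : s < 1) (ha : 0 < a) {D r P : ℝ}
    (hP : a ≤ P) (hD : 0 ≤ D) (hDr : D ≤ r) (hD1 : D ≤ 1) :
    D ^ P / r ^ ((N : ℝ) + s * P) ≤ coneKernel N s a r := by
  have hP0 : 0 < P := ha.trans_le hP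
  -- On the diagonal `r = 0` the numerator vanishes too.
  rcases (hD.trans hDr).eq_or_lt with hr | hr
  · have : D = 0 := le_antisymm (hDr.trans hr.symm.le) hD
    subst this
    rw [Real.zero_rpow hP0.ne', zero_div]
    unfold coneKernel
    split_ifs <;> exact Real.rpow_nonneg (hD.trans hDr) _
  unfold coneKernel
  split_ifs with h
  · calc D ^ P / r ^ ((N : ℝ) + s * P) ≤ r ^ P / r ^ ((N : ℝ) + s * P) := by
          gcongr
      _ = r ^ (P * (1 - s) - N) := by
          rw [← Real.rpow_sub hr]
          congr 1
          ring
      _ ≤ r ^ (a * (1 - s) - N) := by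
          refine Real.rpow_le_rpow_of_exponent_ge hr h.le ?_
          nlinarith
  · calc D ^ P / r ^ ((N : ℝ) + s * P) ≤ 1 / r ^ ((N : ℝ) + s * P) := by
          gcongr
          exact Real.rpow_le_one hD hD1 hP0.le
      _ = r ^ (-((N : ℝ) + s * P)) := by
          rw [Real.rpow_neg hr.le, one_div]
      _ ≤ r ^ (-(N : ℝ) - s * a) := by
          refine Real.rpow_le_rpow_of_exponent_le (not_lt.1 h) ?_
          nlinarith

/-- The radial majorant is integrable over `Q`, because `Q` is covered by the two strips
`Ω × ℝ^N` and `ℝ^N × Ω`. -/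
lemma lintegral_coneKernel_Qset_lt_top (hN : 0 < N) (hbd : Bornology.IsBounded Ω)
    (hs0 : 0 < s) (hs1 : s < 1) (ha : 0 < a) :
    ∫⁻ z in Qset Ω, ENNReal.ofReal (coneKernel N s a ‖z.1 - z.2‖) < ⊤ := by
  set F : EuclideanSpace ℝ (Fin N) × EuclideanSpace ℝ (Fin N) → ℝ≥0∞ :=
    fun z => ENNReal.ofReal (coneKernel N s a ‖z.1 - z.2‖) with hF
  set C : ℝ≥0∞ := ∫⁻ x : EuclideanSpace ℝ (Fin N), ENNReal.ofReal (coneKernel N s a ‖x‖) with hC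
  have hCtop : C < ⊤ := (integrable_coneKernel hN hs0 hs1 ha).lintegral_lt_top
  have hstrip : ∫⁻ z in Ω ×ˢ univ, F z ≤ C * volume Ω := by
    rw [Measure.volume_eq_prod, ← Measure.prod_restrict, Measure.restrict_univ]
    refine (lintegral_prod_le _).trans ?_
    have : ∀ x : EuclideanSpace ℝ (Fin N), ∫⁻ y, F (x, y) = C := fun x =>
      lintegral_sub_left_eq_self
        (fun y : EuclideanSpace ℝ (Fin N) => ENNReal.ofReal (coneKernel N s a ‖y‖)) x
    simp only [this, lintegral_const, Measure.restrict_apply_univ, le_refl]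
  have hstrip' : ∫⁻ z in univ ×ˢ Ω, F z ≤ C * volume Ω := by
    refine le_trans (le_of_eq ?_) hstrip
    rw [Measure.volume_eq_prod, ← Measure.prod_restrict, ← Measure.prod_restrict,
      ← lintegral_prod_swap]
    refine lintegral_congr fun z => ?_
    simp only [hF, Prod.fst_swap, Prod.snd_swap, norm_sub_rev]
  have hcov : Qset Ω ⊆ Ω ×ˢ univ ∪ univ ×ˢ Ω := by
    intro z hz
    by_contra hcon
    simp only [mem_union, mem_prod, mem_univ, and_true, true_and, not_or] at hcon
    exact hz ⟨hcon.1, hcon.2⟩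
  have hfin : C * volume Ω < ⊤ := ENNReal.mul_lt_top hCtop hbd.measure_lt_top
  calc ∫⁻ z in Qset Ω, F z ≤ ∫⁻ z in Ω ×ˢ univ ∪ univ ×ˢ Ω, F z := lintegral_mono_set hcov
    _ ≤ (∫⁻ z in Ω ×ˢ univ, F z) + ∫⁻ z in univ ×ˢ Ω, F z := lintegral_union_le _ _ _
    _ ≤ C * volume Ω + C * volume Ω := add_le_add hstrip hstrip'
    _ < ⊤ := ENNReal.add_lt_top.2 ⟨hfin, hfin⟩

/-- A nonempty bounded open set carries a continuous element of the space with values in `[0, 1]`,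
positive on a ball: the cone `x ↦ max 0 (r - dist x x₀)`. -/
lemma exists_cone (hN : 0 < N) (hΩ : IsOpen Ω) (hne : Ω.Nonempty) (hbd : Bornology.IsBounded Ω)
    (hs0 : 0 < s) (hs1 : s < 1) (ha : 0 < a) (hap : ∀ z ∈ Qset Ω, a ≤ p z) :
    ∃ u : EuclideanSpace ℝ (Fin N) → ℝ, MemW0 Ω s p u ∧ (∀ x, 0 ≤ u x ∧ u x ≤ 1) ∧
      ¬ u =ᵐ[volume.restrict Ω] 0 := by
  obtain ⟨x₀, hx₀⟩ := hne
  obtain ⟨ε, hε, hball⟩ := Metric.isOpen_iff.1 hΩ x₀ hx₀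
  set r := min ε 1 with hr
  have hr0 : 0 < r := lt_min hε one_pos
  set u : EuclideanSpace ℝ (Fin N) → ℝ := fun x => max 0 (r - dist x x₀) with hu
  have hcont : Continuous u := by fun_prop
  have hu01 : ∀ x, 0 ≤ u x ∧ u x ≤ 1 := fun x =>
    ⟨le_max_left _ _, max_le zero_le_one (by
      linarith [min_le_right ε 1, dist_nonneg (x := x) (y := x₀)])⟩
  have hlip : ∀ x y, |u x - u y| ≤ ‖x - y‖ := by
    intro x y
    have h1 : |u x - u y| ≤ |(r - dist x x₀) - (r - dist y x₀)| := by
      simp only [hu, max_comm (0 : ℝ)]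
      exact abs_max_sub_max_le_abs _ _ _
    refine h1.trans ?_
    rw [sub_sub_sub_cancel_left, abs_sub_comm, ← dist_eq_norm]
    exact abs_dist_sub_le _ _ _
  have hosc : ∀ x y, |u x - u y| ≤ 1 := fun x y =>
    abs_sub_le_iff.2 ⟨by linarith [(hu01 x).2, (hu01 y).1], by linarith [(hu01 y).2, (hu01 x).1]⟩
  refine ⟨u, ⟨hcont.measurable, ?_, 1, one_pos, ?_⟩, hu01, ?_⟩
  · refine ae_restrict_of_forall_mem hΩ.measurableSet.compl fun x hx => max_eq_left ?_
    by_contra hcon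
    exact hx (hball (Metric.mem_ball.2 (by linarith [min_le_left ε 1])))
  · refine lt_of_le_of_lt ?_ (lintegral_coneKernel_Qset_lt_top (Ω := Ω) hN hbd hs0 hs1 ha)
    refine setLIntegral_mono_ae' (measurableSet_Qset hΩ) (Eventually.of_forall fun z hz => ?_)
    rw [Real.one_rpow, one_mul]
    exact ENNReal.ofReal_le_ofReal (gag_integrand_le_coneKernel hs0 hs1 ha (hap z hz)
      (abs_nonneg _) (hlip _ _) (hosc _ _))
  · intro hae
    have hnull : volume (Metric.ball x₀ r) = 0 := by
      refine measure_mono_null ?_ ((ae_restrict_iff' hΩ.measurableSet).1 hae)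
      intro x hx hx'
      have hxΩ : x ∈ Ω := hball (Metric.ball_subset_ball (min_le_left _ _) hx)
      have h0 : max 0 (r - dist x x₀) = 0 := hx' hxΩ
      have := (max_eq_left_iff.1 h0)
      linarith [Metric.mem_ball.1 hx]
    exact (Metric.measure_ball_pos volume x₀ hr0).ne' hnull

end Cone

/-- the Nehari manifold is nonempty, and for `u ∈ 𝒩` the unique
fibre maximizer is `λ = 1`. -/
theorem statement_15 {N : ℕ} (Ω : Set (EuclideanSpace ℝ (Fin N))) (hΩ : IsOpen Ω)
    (hbd : Bornology.IsBounded Ω)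
    (s : ℝ) (hs0 : 0 < s) (hs1 : s < 1)
    (p : EuclideanSpace ℝ (Fin N) × EuclideanSpace ℝ (Fin N) → ℝ)
    (hpc : ContinuousOn p (closure (Qset Ω)))
    (hpsym : ∀ z ∈ closure (Qset Ω), p z = p (z.2, z.1))
    (pm pp : ℝ)
    (hpm : IsLeast (p '' closure (Qset Ω)) pm)
    (hpp : IsGreatest (p '' closure (Qset Ω)) pp)
    (h2pm : 2 ≤ pm) (hspN : s * pp < (N : ℝ))
    (q : EuclideanSpace ℝ (Fin N) → ℝ) (hqc : ContinuousOn q (closure Ω))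
    (qm qp : ℝ) (hqm : IsLeast (q '' closure Ω) qm)
    (hqp : IsGreatest (q '' closure Ω) qp)
    (hpq : pp < qm)
    (hcrit : ∀ x ∈ closure Ω, qp < (N : ℝ) * p (x, x) / ((N : ℝ) - s * p (x, x)) / 2 + 1) :
    (∃ u : EuclideanSpace ℝ (Fin N) → ℝ, MemW0 Ω s p u ∧
      ¬ u =ᵐ[volume] (0 : EuclideanSpace ℝ (Fin N) → ℝ) ∧ nehariI Ω s p q u = 0) ∧
    ∀ u : EuclideanSpace ℝ (Fin N) → ℝ, MemW0 Ω s p u →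
      ¬ u =ᵐ[volume] (0 : EuclideanSpace ℝ (Fin N) → ℝ) → nehariI Ω s p q u = 0 →
      (∀ t : ℝ, 0 ≤ t → energyE Ω s p q (fun x => t * u x) ≤ energyE Ω s p q u) ∧
      ∀ l : ℝ, 0 < l → nehariI Ω s p q (fun x => l * u x) = 0 →
        (∀ t : ℝ, 0 ≤ t →
          energyE Ω s p q (fun x => t * u x) ≤ energyE Ω s p q (fun x => l * u x)) →
        l = 1 := by

  have hΩne : Ω.Nonempty := closure_nonempty_iff.1 (image_nonempty.1 ⟨qm, hqm.1⟩)
  have hpb : ∀ z ∈ Qset Ω, pm ≤ p z ∧ p z ≤ pp := fun z hz =>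
    ⟨hpm.2 (mem_image_of_mem _ (subset_closure hz)), hpp.2 (mem_image_of_mem _ (subset_closure hz))⟩
  have hpm0 : 0 < pm := by linarith
  have hpp0 : 0 < pp := hpm0.trans_le (hpp.2 hpm.1)
  have hqm0 : 0 < qm := hpp0.trans hpq
  have hN : 0 < N := by
    have : (0 : ℝ) < N := (mul_pos hs0 hpp0).trans hspN
    exact_mod_cast this
  have hpm_meas : AEMeasurable p (volume.restrict (Qset Ω)) :=
    (hpc.mono subset_closure).aemeasurable (measurableSet_Qset hΩ)
  have hqm_meas : AEMeasurable q (volume.restrict Ω) :=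
    (hqc.mono subset_closure).aemeasurable hΩ.measurableSet
  have hpae : ∀ᵐ z ∂(volume.restrict (Qset Ω)), pm ≤ p z ∧ p z ≤ pp :=
    ae_restrict_of_forall_mem (measurableSet_Qset hΩ) hpb
  have hqb : ∀ x ∈ Ω, qm ≤ q x ∧ q x ≤ qp := fun x hx =>
    ⟨hqm.2 (mem_image_of_mem _ (subset_closure hx)), hqp.2 (mem_image_of_mem _ (subset_closure hx))⟩
  have hqae : ∀ᵐ x ∂(volume.restrict Ω), qm ≤ q x ∧ q x ≤ qp :=
    ae_restrict_of_forall_mem hΩ.measurableSet hqb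
  constructor
  · obtain ⟨v, hv, hv01, hvne⟩ := exists_cone (p := p) hN hΩ hΩne hbd hs0 hs1 hpm0
      (fun z hz => (hpb z hz).1)
    have hvne' : ¬ v =ᵐ[volume] (0 : EuclideanSpace ℝ (Fin N) → ℝ) := fun h =>
      hvne (ae_restrict_of_ae h)
    have hA := hv.integral_gagDensity_pos hN hbd hvne' hpm_meas hpm0 hpae
    have hg0 : ∀ x, 0 ≤ |v x| ^ q x := fun x => Real.rpow_nonneg (abs_nonneg _) _
    have hg : Integrable (fun x => |v x| ^ q x) (volume.restrict Ω) := by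
      have : IsFiniteMeasure (volume.restrict Ω) :=
        ⟨by rw [Measure.restrict_apply_univ]; exact hbd.measure_lt_top⟩
      refine (integrable_const (1 : ℝ)).mono'
        (hv.1.abs.aemeasurable.pow hqm_meas).aestronglyMeasurable ?_
      filter_upwards [hqae] with x hx
      rw [Real.norm_of_nonneg (hg0 x), abs_of_nonneg (hv01 x).1]
      exact Real.rpow_le_one (hv01 x).1 (hv01 x).2 (hqm0.le.trans hx.1)
    have hB : 0 < ∫ x in Ω, |v x| ^ q x := by
      refine lt_of_le_of_ne (integral_nonneg hg0) fun h0 => hvne ?_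
      filter_upwards [(integral_eq_zero_iff_of_nonneg hg0 hg).1 h0.symm, hqae] with x hx hqx
      exact abs_eq_zero.1
        ((Real.rpow_eq_zero (abs_nonneg _) (hqm0.trans_le hqx.1).ne').1 hx)
    obtain ⟨t, ht, hroot⟩ := fibre_root_exists (hv.integrable_gagDensity hpm_meas hpm0 hpae)
      gagDensity_nonneg hpm_meas hpm0 hpae hpp0 hg hg0 hqm_meas hqae hpq hA hB
    refine ⟨fun x => t * v x, hv.smul ht, fun h => hvne' ?_, ?_⟩
    · filter_upwards [h] with x hx
      exact (mul_eq_zero.1 hx).resolve_left ht.ne'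
    · rw [nehariI_smul ht.le, hroot, sub_self]
  · intro u hu hune hI
    have hf := hu.integrable_gagDensity hpm_meas hpm0 hpae
    have hA := hu.integral_gagDensity_pos hN hbd hune hpm_meas hpm0 hpae
    have hg0 : ∀ x, 0 ≤ |u x| ^ q x := fun x => Real.rpow_nonneg (abs_nonneg _) _
    have heq : ∫ z in Qset Ω, gagDensity s p u z = ∫ x in Ω, |u x| ^ q x := sub_eq_zero.1 hI
    -- A non-integrable `|u| ^ q` would have Bochner integral `0`, against `heq` and `hA`.
    have hg : Integrable (fun x => |u x| ^ q x) (volume.restrict Ω) := by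
      by_contra hcon
      rw [heq, integral_undef hcon] at hA
      exact lt_irrefl _ hA
    refine ⟨fun t ht => ?_, fun l hl hIl _ => ?_⟩
    · have h1 := energyE_smul (Ω := Ω) (s := s) (p := p) (q := q) (u := u) zero_le_one
      simp only [one_mul] at h1
      rw [h1, energyE_smul ht]
      exact fibre_energy_le hf gagDensity_nonneg hpm_meas hpm0 hpae hpp0 hg hg0 hqm_meas hqae
        hpq heq ht
    · rw [nehariI_smul hl.le] at hIl
      exact fibre_root_unique hf gagDensity_nonneg hpm_meas hpm0 hpae hpp0 hg hg0 hqm_meas hqae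
        hpq heq hA hl (sub_eq_zero.1 hIl)
end
end
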